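/- arXiv:1302.4703 — 2 statements merged into one kernel-verified Lean document; each statement's English description precedes it below -/
import Mathlib

section
/- For every maximal cap S in AG(4,3), the number of cap-partitions of AG(4,3) containing S as one of their four caps is exactly 216; moreover, every maximal cap disjoint from S occurs together with S in at least one of these 216 cap-partitions. -/
/-- A cap in `AG(n,3)`: a finite set of points of `Fin n → ZMod 3` containing no
three distinct collinear points (three distinct points are collinear iff they sum to zero). -/
def IsCap {n : ℕ} (C : Finset (Fin n → ZMod 3)) : Prop :=
  ∀ x ∈ C, ∀ y ∈ C, ∀ z ∈ C, x ≠ y → x ≠ z → y ≠ z → x + y + z ≠ 0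

/-- A maximal cap: a cap of largest possible size. -/
def MaximalCap {n : ℕ} (C : Finset (Fin n → ZMod 3)) : Prop :=
  IsCap C ∧ ∀ D : Finset (Fin n → ZMod 3), IsCap D → D.card ≤ C.card

/-- A cap-partition of `AG(4,3)`: an unordered set of four pairwise disjoint maximal caps
whose union is the complement of a single point. -/
def IsCapPartition (P : Finset (Finset (Fin 4 → ZMod 3))) : Prop :=
  P.card = 4 ∧ (∀ C ∈ P, MaximalCap C) ∧
  (∀ C ∈ P, ∀ D ∈ P, C ≠ D → Disjoint C D) ∧
  ∃ a : Fin 4 → ZMod 3, P.sup id = Finset.univ \ {a}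


namespace AG43

def mk00 : ℕ := 345407377032751192773193
def mk01 : ℕ := 690814754065502385546386
def mk02 : ℕ := 1381629508131004771092772
def mk10 : ℕ := 33121255331907648622087
def mk11 : ℕ := 264970042655261188976696
def mk12 : ℕ := 2119760341242089511813568
def mk20 : ℕ := 9205357706930553343
def mk21 : ℕ := 4713143145948443311616
def mk22 : ℕ := 2413129290725602975547392
def mk30 : ℕ := 134217727
def mk31 : ℕ := 18014398375264256
def mk32 : ℕ := 2417851621214859839930368
def capTable : List (ℕ × List ℕ) :=
  [(8537627, [0, 10, 12, 15, 27]), (2173467, [0, 10, 12, 25, 27]), (33755675, [0, 10, 12, 11, 27]),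
   (582171, [0, 10, 12, 23, 27]), (44565019, [0, 10, 12, 26, 27]), (4236843, [0, 10, 22, 15, 27]),
   (8526379, [0, 10, 22, 25, 27]), (602667, [0, 10, 22, 23, 27]), (67289643, [0, 10, 22, 11, 27]),
   (80216619, [0, 10, 22, 26, 27]), (2123403, [0, 10, 23, 12, 27]), (33719947, [0, 10, 23, 15, 27]),
   (4209291, [0, 10, 23, 22, 27]), (67308171, [0, 10, 23, 25, 27]),
   (106955403, [0, 10, 23, 11, 27]), (46142987, [0, 10, 11, 12, 27]),
   (77613579, [0, 10, 11, 22, 27]), (101286411, [0, 10, 11, 23, 27])]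

def capA : ℕ := 113286145
def cap63 : ℕ := 9256586163408378881
def cap72 : ℕ := 4722384537870741314561
def capS : ℕ := 78558522648590883129872
def aff63 : List ℕ := [4, 0, 2, 13, 67]
def aff72 : List ℕ := [4, 0, 2, 13, 58]
def capP : ℕ := 1536337368410377902366890
def capQ : ℕ := 75705438253179929633093
def centerTable : List (ℕ × List ℕ) :=
  [(2, [40, 48, 46, 49, 62]), (2, [38, 40, 34, 29, 75]), (2, [32, 48, 38, 41, 78]),
   (2, [38, 34, 40, 29, 75]), (1, [34, 47, 45, 13, 55]), (2, [46, 32, 53, 37, 59]),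
   (2, [32, 38, 48, 41, 78]), (2, [46, 53, 32, 37, 59]), (2, [53, 38, 42, 35, 63]),
   (1, [61, 47, 45, 40, 28]), (2, [30, 31, 36, 39, 69]), (1, [10, 51, 62, 72, 65]),
   (2, [30, 36, 31, 39, 69]), (2, [46, 53, 51, 37, 64]), (2, [51, 36, 52, 33, 54]),
   (1, [10, 62, 51, 72, 65]), (2, [51, 52, 36, 33, 54]), (1, [52, 56, 54, 1, 22]),
   (2, [31, 53, 51, 49, 61]), (1, [60, 61, 12, 18, 75]), (2, [36, 53, 32, 27, 66]),
   (1, [56, 10, 59, 18, 73]), (2, [45, 46, 48, 27, 72]), (1, [45, 10, 48, 64, 38]),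
   (2, [36, 32, 53, 27, 66]), (1, [45, 48, 10, 64, 38]), (2, [52, 32, 30, 43, 73]),
   (2, [62, 16, 14, 27, 40]), (2, [26, 51, 9, 49, 12]), (2, [51, 16, 57, 19, 5]),
   (2, [26, 9, 51, 49, 12]), (1, [9, 10, 12, 18, 36]), (2, [4, 9, 32, 27, 20]),
   (2, [51, 57, 16, 19, 5]), (2, [4, 32, 9, 27, 20]), (2, [9, 57, 55, 67, 80]),
   (2, [9, 24, 48, 41, 11]), (2, [14, 9, 32, 37, 10]), (2, [3, 24, 42, 35, 5]),
   (2, [14, 32, 9, 37, 10]), (0, [0, 1, 3, 9, 27]), (2, [24, 60, 72, 76, 75]),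
   (2, [3, 42, 24, 35, 5]), (2, [24, 72, 60, 76, 75]), (2, [72, 14, 16, 49, 45]),
   (2, [51, 4, 57, 19, 17]), (2, [59, 60, 45, 0, 70]), (2, [11, 31, 26, 39, 1]),
   (2, [59, 45, 60, 0, 70]), (1, [10, 17, 15, 1, 28]), (2, [14, 51, 9, 37, 24]),
   (2, [11, 26, 31, 39, 1]), (2, [14, 9, 51, 37, 24]), (2, [5, 26, 52, 33, 22]),
   (2, [16, 56, 54, 76, 64]), (1, [50, 51, 9, 72, 34]), (2, [46, 60, 17, 0, 20]),
   (1, [50, 9, 51, 72, 34]), (2, [9, 10, 36, 33, 15]), (1, [59, 15, 54, 1, 69]),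
   (2, [46, 17, 60, 0, 20]), (1, [59, 54, 15, 1, 69]), (2, [61, 11, 9, 37, 31]),
   (1, [53, 61, 59, 18, 4]), (2, [15, 16, 48, 27, 3]), (1, [15, 61, 48, 64, 77]),
   (2, [11, 46, 14, 27, 1]), (2, [64, 11, 9, 49, 46]), (2, [54, 46, 57, 19, 74]),
   (1, [15, 48, 61, 64, 77]), (2, [54, 57, 46, 19, 74]), (1, [54, 48, 46, 31, 44]),
   (2, [71, 20, 24, 35, 45]), (2, [14, 71, 60, 76, 61]), (2, [1, 48, 16, 49, 11]),
   (2, [14, 60, 71, 76, 61]), (1, [36, 48, 46, 13, 62]), (2, [20, 34, 22, 29, 12]),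
   (2, [3, 14, 46, 49, 15]), (2, [20, 22, 34, 29, 12]), (2, [22, 14, 38, 41, 7])]

def dirList : List ℕ :=
  [1, 3, 4, 5, 9, 10, 11, 12, 13, 14, 15, 16, 17, 27, 28, 29, 30, 31, 32, 33, 34, 35, 36, 37, 38,
   39, 40, 41, 42, 43, 44, 45, 46, 47, 48, 49, 50, 51, 52, 53]

def planeList : List ℕ :=
  [157073089682, 557286715448, 286174259284, 105432621841, 1030792412672, 176649741604,
   147313468489, 609887220160, 296556734625, 87535788684, 550812807175, 81909654114, 310622071050,
   1099377410048, 157111437604, 157053915721, 557389676992, 286194483873, 105397688460,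
   557273845255, 105386656866, 286222062858, 1030926106624, 176668952649, 147275158308,
   609900265479, 296509063946, 87581595746, 550710022080, 81944429708, 310601979041, 1030792151551,
   147256133778, 176707113618, 550697402424, 310649635412, 81898576145, 610002800184, 87546709265,
   296529302612]

def capList : List ℕ :=
  [14334297858909582467456, 14388770013575970316672, 14485337322684743487872,
   15642938150678081574272, 23833559287298265211200, 24054865315577611694400,
   24940092655967594882368, 28427664378679765582016, 28504916870626854379712,
   28777290358230209278144, 29588669902015483102400, 42667629939032603042080,
   42722750635684841677088, 43760316783778133722400, 43978218116715100771616,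
   47316213847940164305056, 47390054981685200625824, 47446478195055907594400,
   51947285722470059868576, 52185853638885492482464, 56760996458802786156640,
   56894672164120581922912, 57037423183734371274848, 57923949868052502299744,
   61395479691534734197088, 66500526186935022080224, 156151999379227025674504,
   156207120075879264309512, 156282263726342768963848, 157318527357717592675592,
   160726789653446841671816, 160874417759019950215304, 161008093464337745981576,
   165670216416220242071944, 170171578927169136566344, 170448005652100721684552,
   171264259109054994203720, 171482160441991961252936, 174728809667953995809096,
   179454639405948972826824, 179911101992441699446984, 189117193488926420000808,
   189264821594499528544296, 189268232952701581021224, 189342074086446617341992,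
   195240352874988008650024, 199888930121035896870056, 203135576174207610929576,
   209186084626325410178152, 212580358785070232781160, 212801671476209252307304,
   217524089856002176848104, 307121288884981649711364, 307397715609913234829572,
   308282294408317367231748, 311769866131029537931396, 311847118622976626729092,
   311989872815380736577668, 312876399499698867602564, 316404349363761485971844,
   321435961433031179309124, 321491082129683417944132, 322321188773421162497092,
   322375660928087550346308, 325849138637483780866372, 330566041224981528969412,
   340103846753138409291812, 340237522458456205058084, 340325152781417755775012,
   341340002589797304509476, 350727955279674777617572, 358901321191018548166756,
   368363118187431378092260, 368419538228011764564196, 453665462022420247678988,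
   453721885235790954647564, 453790210577240814530572, 454824365367132054098956,
   458071011420303768158476, 459563740810961638987020, 472241630432021040070732,
   477255323759298625933644, 491587287539690663653420, 510163455949291456045164,
   610385490150106850198786, 610439962304773238048002, 610513803438518274368770,
   610666793960997754508546, 614073753740008535171202, 615107908529899774739586,
   615111319888101827216514, 615241584235217570505858, 620253333166650510292354,
   624556102498964449068098, 624612525712335156036674, 624680847880994695423042,
   624828475986567803966530, 628075125212529838522690, 629624274643768095823170,
   634199064917987911820482, 642463509033502262714402, 643497663823393502282786,
   643574916315340591080482, 648237039267223087170850, 653180770338155031237794,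
   656427419564117065793954, 756021719607441721667594, 756908246291759852692490,
   757059285755535013712906, 766296198981637325800586, 775962294283638967178314,
   783931361889393926275274, 793744955436146534469674, 802950175705770068287658,
   906917167979451309383686, 907013728625700409511942, 908023701348120639054854,
   908171329453693747598342, 911417975506865461657862, 916600267831353165295750,
   920881071847206439420294, 922042084033401829983622, 925589897035301201903686,
   931486866644264451835206, 935176436240953957687494, 944479088383687778369574,
   945875250465236876026918, 955099785552022094218406, 1059359619905431298659342,
   1076994779640397578637390, 1077881309497506030158926, 1095663967477223276953646,
   1213745325375445138751745, 1214021752100376723869953, 1214851858744114468422913,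
   1215124232231717823321345, 1218462876504928737640577, 1218538016982601921798273,
   1218689056446377082818689, 1219574283786767066006657, 1223093299837472782418305,
   1227986210951666596126785, 1228041331648318834761793, 1229143811779659934213185,
   1232543441692451455369537, 1237265866735104052953281, 1246798156470965756837921,
   1246926472932167501504545, 1247079460281856661147681, 1247964039080260793549857,
   1251428579803509801615649, 1265599198815227073527905, 1266867047608364747015265,
   1270394997472427365384545, 1360138465711968248741897, 1360359771740247595225097,
   1360490036087363338514441, 1361374614885767470916617, 1364768889044512293519625,
   1370980468908581911073929, 1374227118134543945630089, 1374508418772644529443209,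
   1398060291229238664716329, 1402690714561782709494057, 1511329064418792539758597,
   1511383536573458927607813, 1511601437906395894657029, 1515884344100873079881989,
   1520608071660244145799301, 1520989390596273367765125, 1525347447104073730687365,
   1530047983848007121502277, 1534916975096966598893893, 1539511080188348099264709,
   1548942052282353017159717, 1567899532965123358474341, 1662278786954114658205709,
   1667290535885547597992205, 1700130342734090568220717, 1700348237404167862226989,
   1813486732315248410574851, 1813836351631939181228035, 1814647737838584128095235,
   1814721578972329164416003, 1818117155647792455352579, 1823073271520901166358659,
   1827703694853445211136387, 1832282897573550408073283, 1838181176362091799381315,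
   1841746000576751058878659, 1842903594741884723922115, 1852717188288637332116515,
   1855963834341809046176035, 1857075244796437695038755, 1964510295984315565342731,
   1966127770757003682526219, 1975134404510851933668491, 2002583157792570821840939]

def candS : ℕ := 2339293116579567954654703
def candP : ℕ := 78558539535985544956432
def candQ : ℕ := 807374020159674525408938

/-- Evaluate a natural number before passing it on. -/
noncomputable def force {α : Type} (n : ℕ) (k : ℕ → α) : α :=
  Nat.rec (k 0) (fun m _ => k (Nat.succ m)) n

theorem force_eq {α : Type} (n : ℕ) (k : ℕ → α) : force n k = k n := by
  cases n <;> rfl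

/-- Conditional that evaluates the condition first. -/
noncomputable def bsel (c a b : Bool) : Bool := Bool.rec b a c

theorem bsel_eq (c a b : Bool) : bsel c a b = cond c a b := by cases c <;> rfl

/-- Code of the third point on the line through two points given by codes. -/
def third (n m : ℕ) : ℕ :=
  (6 - n % 3 - m % 3) % 3 + 3 * ((6 - n / 3 % 3 - m / 3 % 3) % 3)
    + 9 * ((6 - n / 9 % 3 - m / 9 % 3) % 3) + 27 * ((6 - n / 27 % 3 - m / 27 % 3) % 3)

noncomputable def sw (F A s m : ℕ) : ℕ :=
  force m fun m => Nat.lor (Nat.lor (Nat.land m F) (Nat.shiftLeft (Nat.land m A) s))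
    (Nat.land (Nat.shiftRight m s) A)

noncomputable def dsw (K0 K1 K2 s d m : ℕ) : ℕ :=
  Nat.rec (sw K0 K1 s m) (fun e _ => Nat.rec (sw K1 K0 (Nat.mul 2 s) m)
    (fun _ _ => sw K2 K0 s m) e) d

/-- Image of the point set with mask `m` under `q ↦ third p q`. -/
noncomputable def refl (p m : ℕ) : ℕ :=
  dsw mk30 mk31 mk32 27 (Nat.mod (Nat.div p 27) 3)
    (dsw mk20 mk21 mk22 9 (Nat.mod (Nat.div p 9) 3)
      (dsw mk10 mk11 mk12 3 (Nat.mod (Nat.div p 3) 3)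
        (dsw mk00 mk01 mk02 1 (Nat.mod p 3) m)))

theorem sw_testBit (F A s m n n' : ℕ)
    (h : (F.testBit n = true ∧ (s ≤ n → A.testBit (n - s) = false) ∧ A.testBit n = false ∧ n' = n) ∨
      (F.testBit n = false ∧ s ≤ n ∧ A.testBit (n - s) = true ∧ A.testBit n = false ∧ n' = n - s) ∨
      (F.testBit n = false ∧ (s ≤ n → A.testBit (n - s) = false) ∧ A.testBit n = true ∧ n' = n + s)) :
    (sw F A s m).testBit n = m.testBit n' := by
  have e : sw F A s m = ((m &&& F) ||| ((m &&& A) <<< s)) ||| ((m >>> s) &&& A) := by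
    rw [sw, force_eq]; rfl
  rw [e]
  simp only [Nat.testBit_or, Nat.testBit_and, Nat.testBit_shiftLeft, Nat.testBit_shiftRight]
  rcases h with ⟨h1, h2, h3, rfl⟩ | ⟨h1, h2, h3, h4, rfl⟩ | ⟨h1, h2, h3, rfl⟩
  · by_cases hs : s ≤ n' <;> simp [h1, h3, hs]
    simp [h2 hs]
  · simp [h1, h2, h3, h4]
  · by_cases hs : s ≤ n <;> simp [h1, h3, hs, Nat.add_comm]
    simp [h2 hs]

/-- Replace the base three digit of weight `s` in `n` as in `third`. -/
def sb (s d n : ℕ) : ℕ := n - n / s % 3 * s + (6 - d - n / s % 3) % 3 * s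

def swOk (F A s n n' : ℕ) : Bool :=
  (F.testBit n && (!(Nat.ble s n) || !A.testBit (n - s)) && !A.testBit n && Nat.beq n' n) ||
  (!F.testBit n && Nat.ble s n && A.testBit (n - s) && !A.testBit n && Nat.beq n' (n - s)) ||
  (!F.testBit n && (!(Nat.ble s n) || !A.testBit (n - s)) && A.testBit n && Nat.beq n' (n + s))

theorem sw_ok {F A s n n' : ℕ} (m : ℕ) (h : swOk F A s n n' = true) :
    (sw F A s m).testBit n = m.testBit n' := by
  apply sw_testBit
  simp only [swOk, Bool.or_eq_true, Bool.and_eq_true, Bool.not_eq_true', Nat.ble_eq] at h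
  have hb : ∀ a b : ℕ, Nat.ble a b = false ↔ ¬ a ≤ b := by
    intro a b; rw [← Nat.ble_eq, Bool.not_eq_true]
  rw [hb] at h
  simp only [Nat.beq_eq] at h
  tauto

def dswOk (K0 K1 K2 s : ℕ) : Bool :=
  (List.range 81).all fun n =>
    swOk K0 K1 s n (sb s 0 n) && swOk K1 K0 (Nat.mul 2 s) n (sb s 1 n) && swOk K2 K0 s n (sb s 2 n)

theorem dsw_testBit {K0 K1 K2 s : ℕ} (h : dswOk K0 K1 K2 s = true) (d m n : ℕ) (hd : d < 3)
    (hn : n < 81) : (dsw K0 K1 K2 s d m).testBit n = m.testBit (sb s d n) := by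
  simp only [dswOk, List.all_eq_true, List.mem_range, Bool.and_eq_true] at h
  obtain ⟨⟨h0, h1⟩, h2⟩ := h n hn
  interval_cases d
  · exact sw_ok m h0
  · exact sw_ok m h1
  · exact sw_ok m h2

theorem sb_lt (s d n : ℕ) (hs : s = 1 ∨ s = 3 ∨ s = 9 ∨ s = 27) (hn : n < 81) :
    sb s d n < 81 := by
  unfold sb
  rcases hs with rfl | rfl | rfl | rfl <;> omega

theorem refl_testBit (p m n : ℕ) (hn : n < 81) :
    (refl p m).testBit n = m.testBit (third p n) := by
  unfold refl
  have h27 : dswOk mk30 mk31 mk32 27 = true := by decide +kernel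
  have h9 : dswOk mk20 mk21 mk22 9 = true := by decide +kernel
  have h3 : dswOk mk10 mk11 mk12 3 = true := by decide +kernel
  have h1 : dswOk mk00 mk01 mk02 1 = true := by decide +kernel
  have hm : ∀ a, Nat.mod a 3 < 3 := fun a => Nat.mod_lt a (by norm_num)
  rw [dsw_testBit h27 _ _ _ (hm _) hn]
  have l1 := sb_lt 27 (Nat.mod (Nat.div p 27) 3) n (by simp) hn
  rw [dsw_testBit h9 _ _ _ (hm _) l1]
  have l2 := sb_lt 9 (Nat.mod (Nat.div p 9) 3) _ (by simp) l1
  rw [dsw_testBit h3 _ _ _ (hm _) l2]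
  have l3 := sb_lt 3 (Nat.mod (Nat.div p 3) 3) _ (by simp) l2
  rw [dsw_testBit h1 _ _ _ (hm _) l3]
  congr 1
  have e27 : Nat.mod (Nat.div p 27) 3 = p / 27 % 3 := rfl
  have e9 : Nat.mod (Nat.div p 9) 3 = p / 9 % 3 := rfl
  have e3 : Nat.mod (Nat.div p 3) 3 = p / 3 % 3 := rfl
  have e1 : Nat.mod p 3 = p % 3 := rfl
  rw [e27, e9, e3, e1]
  have key : ∀ a b c d n : ℕ, a < 3 → b < 3 → c < 3 → d < 3 → n < 81 →
      sb 1 a (sb 3 b (sb 9 c (sb 27 d n))) = (6 - a - n % 3) % 3 + 3 * ((6 - b - n / 3 % 3) % 3)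
        + 9 * ((6 - c - n / 9 % 3) % 3) + 27 * ((6 - d - n / 27 % 3) % 3) := by
    intro a b c d n ha hb hc hd hn
    have : ∀ d < 3, ∀ c < 3, ∀ b < 3, ∀ a < 3, ∀ n < 81,
      Nat.beq (sb 1 a (sb 3 b (sb 9 c (sb 27 d n)))) ((6 - a - n % 3) % 3 + 3 * ((6 - b - n / 3 % 3) % 3)
        + 9 * ((6 - c - n / 9 % 3) % 3) + 27 * ((6 - d - n / 27 % 3) % 3)) = true := by decide +kernel
    have h := this d hd c hc b hb a ha n hn
    rwa [Nat.beq_eq] at h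
  exact key _ _ _ _ n (by omega) (by omega) (by omega) (by omega) hn

/-- Remove the bits of `b` from `a`. -/
def rem (a b : ℕ) : ℕ := Nat.xor a (Nat.land a b)

theorem rem_testBit (a b n : ℕ) : (rem a b).testBit n = (a.testBit n && !b.testBit n) := by
  have e : rem a b = a ^^^ (a &&& b) := rfl
  rw [e, Nat.testBit_xor, Nat.testBit_and]
  cases a.testBit n <;> cases b.testBit n <;> rfl

noncomputable def scanStep (ch cand h : ℕ) (ih : List ℕ → ℕ → ℕ → Bool) (un : List ℕ) (c x : ℕ) :
    Bool :=
  bsel (Nat.beq (Nat.land h ch) 0)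
    (force (Nat.land h cand) fun y =>
      bsel (Nat.beq y 0) true
        (bsel (Nat.ble c 1) (ih (h :: un) c x)
          (force (Nat.land y (Nat.sub y 1)) fun z =>
            bsel (Nat.beq z 0) (ih (h :: un) 1 y)
              (bsel (Nat.ble c 2) (ih (h :: un) c x)
                (bsel (Nat.beq (Nat.land z (Nat.sub z 1)) 0) (ih (h :: un) 2 y)
                  (bsel (Nat.ble c 3) (ih (h :: un) c x) (ih (h :: un) 3 y)))))))
    (ih un c x)

/-- Scan the planes; stop with success if one cannot be hit, otherwise continue with the list of planes
not hit yet and a mask of candidates to branch on. -/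
noncomputable def scan (k : List ℕ → ℕ → Bool) (ch cand : ℕ) (pl : List ℕ) :
    List ℕ → ℕ → ℕ → Bool :=
  List.rec (motive := fun _ => List ℕ → ℕ → ℕ → Bool) (fun un _ x => k un x)
    (fun h _ ih un c x => scanStep ch cand h ih un c x) pl

/-- Generic branching search. -/
noncomputable def runStep (pre : ℕ → ℕ → Bool) (bm : ℕ → ℕ) (cl : ℕ → ℕ → ℕ) (leaf : ℕ → Bool)
    (ih : List ℕ → ℕ → ℕ → Bool) (pl : List ℕ) (ch cand : ℕ) : Bool :=
  bsel (pre ch cand) true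
    (bsel (Nat.beq cand 0) (leaf ch)
      (scan (fun un x => force (Nat.log2 x) fun p =>
        bsel (Nat.ble p 80)
          (force (bm p) fun b => force (Nat.lor ch b) fun ch' =>
            force (rem cand (Nat.lor b (cl p ch'))) fun cand' =>
            bsel (ih un ch' cand') (force (rem cand b) fun cand'' => ih un ch cand'') false)
          false)
        ch cand pl [] 4 cand))

noncomputable def run (pre : ℕ → ℕ → Bool) (bm : ℕ → ℕ) (cl : ℕ → ℕ → ℕ) (leaf : ℕ → Bool)
    (k : ℕ) : List ℕ → ℕ → ℕ → Bool :=
  Nat.rec (motive := fun _ => List ℕ → ℕ → ℕ → Bool) (fun _ _ _ => false)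
    (fun _ ih pl ch cand => runStep pre bm cl leaf ih pl ch cand) k

def Inv (T : ℕ → Prop) (ch cand : ℕ) : Prop :=
  (∀ n, ch.testBit n = true → T n) ∧ ∀ n, T n → ch.testBit n = true ∨ cand.testBit n = true

theorem scan_cons (k : List ℕ → ℕ → Bool) (ch cand h : ℕ) (hs un : List ℕ) (c x : ℕ) :
    scan k ch cand (h :: hs) un c x =
      cond (Nat.beq (Nat.land h ch) 0)
        (cond (Nat.beq (Nat.land h cand) 0) true
          (cond (Nat.ble c 1) (scan k ch cand hs (h :: un) c x)
            (cond (Nat.beq (Nat.land (h.land cand) ((h.land cand).sub 1)) 0)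
              (scan k ch cand hs (h :: un) 1 (h.land cand))
              (cond (Nat.ble c 2) (scan k ch cand hs (h :: un) c x)
                (cond (Nat.beq (Nat.land (Nat.land (h.land cand) ((h.land cand).sub 1))
                    (Nat.sub (Nat.land (h.land cand) ((h.land cand).sub 1)) 1)) 0)
                  (scan k ch cand hs (h :: un) 2 (h.land cand))
                  (cond (Nat.ble c 3) (scan k ch cand hs (h :: un) c x)
                    (scan k ch cand hs (h :: un) 3 (h.land cand))))))))
        (scan k ch cand hs un c x) := by
  have e : scan k ch cand (h :: hs) un c x = scanStep ch cand h (scan k ch cand hs) un c x := rfl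
  rw [e, scanStep]
  simp only [force_eq, bsel_eq]

theorem scan_sound {T : ℕ → Prop} {k : List ℕ → ℕ → Bool} {ch cand : ℕ} (hi : Inv T ch cand) :
    ∀ (pl un : List ℕ) (c x : ℕ), (∀ h ∈ pl, ∃ n, T n ∧ h.testBit n = true) →
      (∀ h ∈ un, ∃ n, T n ∧ h.testBit n = true) → scan k ch cand pl un c x = true →
      ∃ un' x', (∀ h ∈ un', ∃ n, T n ∧ h.testBit n = true) ∧ k un' x' = true := by
  intro pl
  induction pl with
  | nil => intro un c x _ hu h; exact ⟨un, x, hu, h⟩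
  | cons h hs ih =>
    intro un c x hp hu hr
    have hh := hp h (by simp)
    have hp' : ∀ h ∈ hs, ∃ n, T n ∧ h.testBit n = true := fun g hg => hp g (by simp [hg])
    have hu' : ∀ g ∈ h :: un, ∃ n, T n ∧ g.testBit n = true := by
      intro g hg
      rcases List.mem_cons.1 hg with rfl | hg
      · exact hh
      · exact hu g hg
    rw [scan_cons] at hr
    cases h1 : Nat.beq (Nat.land h ch) 0 with
    | false => rw [h1] at hr; exact ih _ _ _ hp' hu hr
    | true =>
      rw [h1] at hr
      simp only [cond_true] at hr
      cases h2 : Nat.beq (Nat.land h cand) 0 with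
      | true =>
        exfalso
        obtain ⟨n, hn, hb⟩ := hh
        have e1 : h &&& ch = 0 := by rw [Nat.beq_eq] at h1; exact h1
        have e2 : h &&& cand = 0 := by rw [Nat.beq_eq] at h2; exact h2
        have g1 : (h &&& ch).testBit n = false := by rw [e1]; simp
        have g2 : (h &&& cand).testBit n = false := by rw [e2]; simp
        rw [Nat.testBit_and, hb] at g1 g2
        rcases hi.2 n hn with h | h <;> simp_all
      | false =>
        rw [h2] at hr
        generalize Nat.land (h.land cand) ((h.land cand).sub 1) = z at hr
        cases h3 : Nat.ble c 1 <;> rw [h3] at hr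
        swap
        · exact ih _ _ _ hp' hu' hr
        cases h4 : Nat.beq z 0 <;> rw [h4] at hr
        swap
        · exact ih _ _ _ hp' hu' hr
        cases h5 : Nat.ble c 2 <;> rw [h5] at hr
        swap
        · exact ih _ _ _ hp' hu' hr
        cases h6 : Nat.beq (z.land (z.sub 1)) 0 <;> rw [h6] at hr
        swap
        · exact ih _ _ _ hp' hu' hr
        cases h7 : Nat.ble c 3 <;> rw [h7] at hr
        · exact ih _ _ _ hp' hu' hr
        · exact ih _ _ _ hp' hu' hr

theorem run_succ (pre : ℕ → ℕ → Bool) (bm : ℕ → ℕ) (cl : ℕ → ℕ → ℕ) (leaf : ℕ → Bool)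
    (k : ℕ) (pl : List ℕ) (ch cand : ℕ) : run pre bm cl leaf (k + 1) pl ch cand =
      cond (pre ch cand) true (cond (Nat.beq cand 0) (leaf ch)
        (scan (fun un x => cond (Nat.ble (Nat.log2 x) 80)
            ((run pre bm cl leaf k un (Nat.lor ch (bm (Nat.log2 x)))
              (rem cand (Nat.lor (bm (Nat.log2 x))
                (cl (Nat.log2 x) (Nat.lor ch (bm (Nat.log2 x))))))).and
              (run pre bm cl leaf k un ch (rem cand (bm (Nat.log2 x)))))
            false) ch cand pl [] 4 cand)) := by
  have e : run pre bm cl leaf (k + 1) pl ch cand =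
    runStep pre bm cl leaf (run pre bm cl leaf k) pl ch cand := rfl
  rw [e, runStep]
  have hand : ∀ a b : Bool, cond a b false = a.and b := by
    intro a b; cases a <;> rfl
  simp only [force_eq, bsel_eq, hand]

theorem run_sound {T : ℕ → Prop} {pre : ℕ → ℕ → Bool} {bm : ℕ → ℕ} {cl : ℕ → ℕ → ℕ}
    {leaf : ℕ → Bool}
    (hpre : ∀ ch cand, pre ch cand = true → ¬ Inv T ch cand)
    (hb : ∀ p n, p ≤ 80 → (bm p).testBit n = true → (T n ↔ T p))
    (hc : ∀ p ch, p ≤ 80 → T p → (∀ n, ch.testBit n = true → T n) →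
      ∀ n, T n → (cl p ch).testBit n = true → ch.testBit n = true) :
    ∀ (k : ℕ) (pl : List ℕ) (ch cand : ℕ), (∀ h ∈ pl, ∃ n, T n ∧ h.testBit n = true) →
      Inv T ch cand → run pre bm cl leaf k pl ch cand = true →
      ∃ m, leaf m = true ∧ ∀ n, T n ↔ m.testBit n = true := by
  intro k
  induction k with
  | zero => intro pl ch cand _ _ h; simp [run] at h
  | succ k ih =>
    intro pl ch cand hp hi hr
    rw [run_succ] at hr
    cases h2 : pre ch cand with
    | true => exact absurd hi (hpre _ _ h2)
    | false =>
      rw [h2] at hr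
      simp only [cond_false] at hr
      cases h1 : Nat.beq cand 0 with
      | true =>
        rw [h1] at hr
        rw [Nat.beq_eq] at h1
        subst h1
        refine ⟨ch, hr, fun n => ⟨fun hn => ?_, hi.1 n⟩⟩
        rcases hi.2 n hn with h | h
        · exact h
        · simp at h
      | false =>
        rw [h1] at hr
        simp only [cond_false] at hr
        obtain ⟨un, x, hu, hk⟩ := scan_sound hi pl [] 4 cand hp (by simp) hr
        generalize Nat.log2 x = p at hk
        cases h3 : Nat.ble p 80 with
        | false => rw [h3] at hk; simp at hk
        | true =>
          rw [h3] at hk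
          rw [Nat.ble_eq] at h3
          simp only [cond_true, Bool.and_eq_true] at hk
          obtain ⟨ha, hb'⟩ := hk
          by_cases hT : T p
          · refine ih un _ _ hu ?_ ha
            have hch : ∀ n, (Nat.lor ch (bm p)).testBit n = true → T n := by
              intro n hn
              have hn : (ch ||| bm p).testBit n = true := hn
              rw [Nat.testBit_or, Bool.or_eq_true] at hn
              rcases hn with h | h
              · exact hi.1 n h
              · exact (hb p n h3 h).2 hT
            refine ⟨hch, ?_⟩
            intro n hn
            by_cases hm : (Nat.lor ch (bm p)).testBit n = true
            · exact Or.inl hm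
            right
            have hm' : ¬ (ch ||| bm p).testBit n = true := hm
            rw [Nat.testBit_or, Bool.or_eq_true, not_or] at hm'
            have hcl : (cl p (Nat.lor ch (bm p))).testBit n = false := by
              by_contra hcon
              exact hm (hc p _ h3 hT hch n hn (by simpa using hcon))
            have e : Nat.lor (bm p) (cl p (Nat.lor ch (bm p))) = bm p ||| cl p (Nat.lor ch (bm p)) := rfl
            rw [rem_testBit, e, Nat.testBit_or, hcl]
            rcases hi.2 n hn with h | h
            · exact absurd h hm'.1
            · simp [h, hm'.2]
          · refine ih un _ _ hu ⟨hi.1, ?_⟩ hb'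
            intro n hn
            rcases hi.2 n hn with h | h
            · exact Or.inl h
            · right
              rw [rem_testBit, h]
              have : ¬ (bm p).testBit n = true := fun hh => hT ((hb p n h3 hh).1 hn)
              simp [this]


/-- Number of bits of `m` in the positions below `k`. -/
noncomputable def pop (k : ℕ) : ℕ → ℕ :=
  Nat.rec (motive := fun _ => ℕ → ℕ) (fun _ => 0)
    (fun _ ih m => force m fun m => Nat.add (Nat.mod m 2) (ih (Nat.div m 2))) k

theorem pop_eq (k : ℕ) : ∀ m, pop k m = ((Finset.range k).filter fun n => m.testBit n = true).card := by
  induction k with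
  | zero => intro m; simp [pop]
  | succ k ih =>
    intro m
    have e : pop (k + 1) m = force m fun m => Nat.add (Nat.mod m 2) (pop k (Nat.div m 2)) := rfl
    have e2 : pop (k + 1) m = m % 2 + pop k (m / 2) := by rw [e, force_eq]; rfl
    rw [e2, ih, Finset.card_filter, Finset.card_filter, Finset.sum_range_succ']
    simp only [Nat.testBit_succ, Nat.testBit_zero]
    rw [add_comm]
    congr 1
    rcases Nat.mod_two_eq_zero_or_one m with h | h <;> simp [h]

noncomputable def clean (ps : List ℕ) (ch cand : ℕ) : ℕ := ps.foldr (fun p c => rem c (refl p ch)) cand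

def bm1 (p : ℕ) : ℕ := Nat.pow 2 p

def bm2 (p : ℕ) : ℕ := Nat.lor (Nat.pow 2 p) (Nat.pow 2 (Nat.sub 80 p))

noncomputable def cl2 (p ch : ℕ) : ℕ := Nat.lor (refl p ch) (refl (Nat.sub 80 p) ch)

def leafA (m : ℕ) : Bool := capTable.any fun e => Nat.beq e.1 m

def leafB (m : ℕ) : Bool := Nat.beq m cap63 || Nat.beq m cap72

noncomputable def leafS (m : ℕ) : Bool := cond (Nat.beq (pop 81 m) 20) (capList.any fun e => Nat.beq e m) true

noncomputable def leafN (m : ℕ) : Bool := cond (Nat.beq (pop 81 m) 20) false true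

noncomputable def pre9 (ch cand : ℕ) : Bool := Nat.ble (pop 27 (Nat.lor ch cand)) 8

noncomputable def pre20 (ch cand : ℕ) : Bool := Nat.ble (pop 81 (Nat.lor ch cand)) 19

def preNone (_ _ : ℕ) : Bool := false

theorem runA : run pre9 bm1 refl leafA 30 [] 523 (clean [0, 1, 3, 9] 523 mk30) = true := by
  decide +kernel

theorem runB : ((List.range 81).all fun c => cond (Nat.ble c 54) true
    (force (capA + 2 ^ 54 + 2 ^ c) fun ch =>
      run pre20 bm1 refl leafB 30 [] ch (clean [54, c] ch mk31))) = true := by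
  decide +kernel

theorem runP : run preNone bm2 cl2 leafN 45 planeList 0 candP = true := by
  decide +kernel

theorem runQ : run preNone bm2 cl2 leafN 45 planeList 0 candQ = true := by
  decide +kernel


theorem runS : run preNone bm2 cl2 leafS 45 planeList 0 candS = true := by
  decide +kernel

/-- The points of the four dimensional affine space over the field with three elements. -/
abbrev V : Type := Fin 4 → ZMod 3

/-- The natural number whose base three digits are the coordinates of `x`. -/
def code (x : V) : ℕ := (x 0).val + 3 * (x 1).val + 9 * (x 2).val + 27 * (x 3).val

/-- The point whose coordinates are the base three digits of `n`. -/
def pt (n : ℕ) : V := ![((n : ℕ) : ZMod 3), ((n / 3 : ℕ) : ZMod 3), ((n / 9 : ℕ) : ZMod 3),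
  ((n / 27 : ℕ) : ZMod 3)]

theorem pt_zero' (n : ℕ) : pt n 0 = ((n : ℕ) : ZMod 3) := rfl
theorem pt_one' (n : ℕ) : pt n 1 = ((n / 3 : ℕ) : ZMod 3) := rfl
theorem pt_two' (n : ℕ) : pt n 2 = ((n / 9 : ℕ) : ZMod 3) := rfl
theorem pt_three' (n : ℕ) : pt n 3 = ((n / 27 : ℕ) : ZMod 3) := rfl

theorem code_lt (x : V) : code x < 81 := by
  have h0 := ZMod.val_lt (x 0)
  have h1 := ZMod.val_lt (x 1)
  have h2 := ZMod.val_lt (x 2)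
  have h3 := ZMod.val_lt (x 3)
  unfold code; omega

theorem code_pt {n : ℕ} (hn : n < 81) : code (pt n) = n := by
  unfold code
  rw [pt_zero', pt_one', pt_two', pt_three']
  simp only [ZMod.val_natCast]
  omega

theorem pt_code (x : V) : pt (code x) = x := by
  have h0 := ZMod.val_lt (x 0)
  have h1 := ZMod.val_lt (x 1)
  have h2 := ZMod.val_lt (x 2)
  have h3 := ZMod.val_lt (x 3)
  have key : ∀ (a : ZMod 3) (k : ℕ), k % 3 = a.val → (k : ZMod 3) = a := by
    intro a k h
    rw [← ZMod.natCast_mod, h, ZMod.natCast_val, ZMod.cast_id]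
  funext i
  fin_cases i
  · exact key (x 0) _ (by unfold code; omega)
  · exact key (x 1) _ (by unfold code; omega)
  · exact key (x 2) _ (by unfold code; omega)
  · exact key (x 3) _ (by unfold code; omega)

theorem code_inj {x y : V} (h : code x = code y) : x = y := by
  rw [← pt_code x, h, pt_code]

theorem pt_inj {n m : ℕ} (hn : n < 81) (hm : m < 81) (h : pt n = pt m) : n = m := by
  rw [← code_pt hn, h, code_pt hm]

theorem third_lt (n m : ℕ) : third n m < 81 := by
  unfold third; omega

theorem pt_add_third (n m : ℕ) : pt n + pt m + pt (third n m) = 0 := by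
  funext i
  fin_cases i
  · change ((n : ℕ) : ZMod 3) + ((m : ℕ) : ZMod 3) + ((third n m : ℕ) : ZMod 3) = 0
    rw [← Nat.cast_add, ← Nat.cast_add, ZMod.natCast_eq_zero_iff]
    unfold third; omega
  · change ((n / 3 : ℕ) : ZMod 3) + ((m / 3 : ℕ) : ZMod 3) + ((third n m / 3 : ℕ) : ZMod 3) = 0
    rw [← Nat.cast_add, ← Nat.cast_add, ZMod.natCast_eq_zero_iff]
    unfold third; omega
  · change ((n / 9 : ℕ) : ZMod 3) + ((m / 9 : ℕ) : ZMod 3) + ((third n m / 9 : ℕ) : ZMod 3) = 0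
    rw [← Nat.cast_add, ← Nat.cast_add, ZMod.natCast_eq_zero_iff]
    unfold third; omega
  · change ((n / 27 : ℕ) : ZMod 3) + ((m / 27 : ℕ) : ZMod 3) + ((third n m / 27 : ℕ) : ZMod 3) = 0
    rw [← Nat.cast_add, ← Nat.cast_add, ZMod.natCast_eq_zero_iff]
    unfold third; omega

theorem three_smul' (x : V) : x + x + x = 0 := by
  have h : ∀ a : ZMod 3, a + a + a = 0 := by decide
  funext i; exact h (x i)

theorem eq_of_add_self {x z : V} (h : x + x + z = 0) : z = x := by
  have h1 := three_smul' x
  exact add_left_cancel (h.trans h1.symm)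

/-- In a cap, three points summing to zero coincide. -/
theorem cap_eq_of_sum {S : Finset V} (hS : IsCap S) {x y z : V} (hx : x ∈ S) (hy : y ∈ S)
    (hz : z ∈ S) (h : x + y + z = 0) : x = y ∧ z = y := by
  by_cases h1 : x = y
  · subst h1
    exact ⟨rfl, eq_of_add_self h⟩
  by_cases h2 : x = z
  · subst h2
    have := eq_of_add_self (x := x) (z := y) (by rw [← h]; abel)
    exact absurd this.symm h1
  by_cases h3 : y = z
  · subst h3
    have := eq_of_add_self (x := y) (z := x) (by rw [← h]; abel)
    exact absurd this h1
  exact absurd h (hS x hx y hy z hz h1 h2 h3)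

theorem third_eq_of_cap {S : Finset V} (hS : IsCap S) {p n : ℕ} (hp : p < 81) (hn : n < 81)
    (h1 : pt p ∈ S) (h2 : pt n ∈ S) (h3 : pt (third p n) ∈ S) : p = n ∧ third p n = n := by
  obtain ⟨a, b⟩ := cap_eq_of_sum hS h1 h2 h3 (pt_add_third p n)
  exact ⟨pt_inj hp hn a, pt_inj (third_lt _ _) hn b⟩

/-- The point set with mask `m`. -/
def toSet (m : ℕ) : Finset V := Finset.univ.filter fun x => m.testBit (code x) = true

theorem mem_toSet {m : ℕ} {x : V} : x ∈ toSet m ↔ m.testBit (code x) = true := by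
  simp [toSet]

theorem card_filter_code (p : ℕ → Prop) [DecidablePred p] :
    (Finset.univ.filter fun x : V => p (code x)).card = ((Finset.range 81).filter p).card := by
  apply Finset.card_bij (fun x _ => code x)
  · intro x hx; simp at hx ⊢; exact ⟨code_lt x, hx⟩
  · intro x _ y _ h; exact code_inj h
  · intro n hn
    simp at hn
    exact ⟨pt n, by simp [code_pt hn.1, hn.2], code_pt hn.1⟩

theorem card_toSet (m : ℕ) : (toSet m).card = pop 81 m := by
  rw [pop_eq]; exact card_filter_code fun n => m.testBit n = true

/-- Collineations. -/
def Good (e : V ≃ V) : Prop := ∀ x y z : V, x + y + z = 0 ↔ e x + e y + e z = 0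

theorem Good.refl : Good (Equiv.refl V) := fun _ _ _ => Iff.rfl

theorem Good.symm {e : V ≃ V} (h : Good e) : Good e.symm := by
  intro x y z
  have := h (e.symm x) (e.symm y) (e.symm z)
  simp only [Equiv.apply_symm_apply] at this
  exact this.symm

theorem Good.trans {e f : V ≃ V} (h : Good e) (h' : Good f) : Good (e.trans f) := by
  intro x y z
  exact (h x y z).trans (h' _ _ _)

theorem good_of_affine (e : V ≃ V) (h : ∀ x y, e (x + y) = e x + e y - e 0) : Good e := by
  intro x y z
  have h1 : e (x + y + z) + (e 0 + e 0) = e x + e y + e z := by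
    rw [h, h]; abel
  constructor
  · intro hs
    rw [← h1, hs, ← add_assoc, three_smul']
  · intro hs
    apply e.injective
    have h2 := three_smul' (e 0)
    rw [add_assoc] at h2
    rw [hs] at h1
    exact add_right_cancel (h1.trans h2.symm)

theorem good_of_linear (f : V → V) (hadd : ∀ x y, f (x + y) = f x + f y)
    (h0 : ∀ x, f x = 0 → x = 0) : ∃ e : V ≃ V, Good e ∧ ∀ x, e x = f x := by
  have hz : f 0 = 0 := by
    have := hadd 0 0
    simpa using this
  have hi : Function.Injective f := by
    intro x y h
    have h1 : f (x - y) = 0 := by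
      have := hadd (x - y) y
      rw [sub_add_cancel, h] at this
      simpa using this
    exact sub_eq_zero.1 (h0 _ h1)
  refine ⟨Equiv.ofBijective f (Finite.injective_iff_bijective.1 hi), ?_, fun x => rfl⟩
  apply good_of_affine
  intro x y
  simp [hadd, hz]

theorem good_translate (t : V) : Good (Equiv.addRight t) := by
  apply good_of_affine
  intro x y
  simp only [Equiv.coe_addRight]; abel

/-- Equivalence of point sets under collineations. -/
def Eqv (S S' : Finset V) : Prop := ∃ e : V ≃ V, Good e ∧ ∀ x, x ∈ S ↔ e x ∈ S'

theorem Eqv.refl (S : Finset V) : Eqv S S := ⟨_, Good.refl, fun _ => Iff.rfl⟩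

theorem Eqv.symm {S S' : Finset V} (h : Eqv S S') : Eqv S' S := by
  obtain ⟨e, he, h⟩ := h
  refine ⟨e.symm, he.symm, fun x => ?_⟩
  rw [h]; simp

theorem Eqv.trans {S S' S'' : Finset V} (h : Eqv S S') (h' : Eqv S' S'') : Eqv S S'' := by
  obtain ⟨e, he, h⟩ := h
  obtain ⟨f, hf, h'⟩ := h'
  exact ⟨e.trans f, he.trans hf, fun x => (h x).trans (h' _)⟩

theorem Good.isCap {e : V ≃ V} (he : Good e) {S S' : Finset V} (h : ∀ x, x ∈ S ↔ e x ∈ S')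
    (hS : IsCap S) : IsCap S' := by
  intro x hx y hy z hz hxy hxz hyz hs
  have hm : ∀ x ∈ S', e.symm x ∈ S := fun x hx => (h _).2 (by simpa using hx)
  refine hS _ (hm x hx) _ (hm y hy) _ (hm z hz) ?_ ?_ ?_ ((he.symm x y z).1 hs)
  · simpa using hxy
  · simpa using hxz
  · simpa using hyz

theorem card_of_equiv (e : V ≃ V) {S S' : Finset V} (h : ∀ x, x ∈ S ↔ e x ∈ S') :
    S.card = S'.card := Finset.card_equiv e h

theorem Eqv.isCap {S S' : Finset V} (h : Eqv S S') (hS : IsCap S) : IsCap S' := by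
  obtain ⟨e, he, h⟩ := h
  exact he.isCap h hS

theorem Eqv.card {S S' : Finset V} (h : Eqv S S') : S.card = S'.card := by
  obtain ⟨e, he, h⟩ := h
  exact card_of_equiv e h

theorem mem_map_equiv (e : V ≃ V) (S : Finset V) (x : V) :
    x ∈ S ↔ e x ∈ S.map e.toEmbedding := by simp

theorem Good.eqv_map {e : V ≃ V} (he : Good e) (S : Finset V) : Eqv S (S.map e.toEmbedding) :=
  ⟨e, he, mem_map_equiv e S⟩

/-- A digit of the image of `n` under an affine map. -/
def affd (s a b c d e n : ℕ) : ℕ :=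
  (a / s % 3 * (1 + 2 * (n % 3 + n / 3 % 3 + n / 9 % 3 + n / 27 % 3)) + n % 3 * (b / s % 3)
      + n / 3 % 3 * (c / s % 3) + n / 9 % 3 * (d / s % 3) + n / 27 % 3 * (e / s % 3)) % 3

/-- Affine map given by the codes of the images of the standard frame, in coordinates. -/
def affc (t : List ℕ) (n : ℕ) : ℕ :=
  match t with
  | [a, b, c, d, e] => affd 1 a b c d e n + 3 * affd 3 a b c d e n + 9 * affd 9 a b c d e n
      + 27 * affd 27 a b c d e n
  | _ => 0

/-- The map on points given by `affc` is onto. -/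
def affOk (t : List ℕ) : Bool :=
  Nat.beq ((List.range 81).foldr (fun n r => Nat.lor r (Nat.pow 2 (affc t n))) 0)
    (2 ^ 81 - 1)

/-- `affc t` maps the mask `m` to the second mask. -/
def mapsTo (t : List ℕ) (m m' : ℕ) : Bool :=
  (List.range 81).all fun n => m.testBit n == m'.testBit (affc t n)

theorem mapsTo_apply {t : List ℕ} {m m' : ℕ} (h : mapsTo t m m' = true) {n : ℕ} (hn : n < 81) :
    m.testBit n = m'.testBit (affc t n) := by
  simp only [mapsTo, List.all_eq_true, List.mem_range, beq_iff_eq] at h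
  exact h n hn

theorem affd_cast (s a b c d e n : ℕ) : ((affd s a b c d e n : ℕ) : ZMod 3) =
    (a / s : ℕ) + pt n 0 * ((b / s : ℕ) - (a / s : ℕ)) + pt n 1 * ((c / s : ℕ) - (a / s : ℕ))
      + pt n 2 * ((d / s : ℕ) - (a / s : ℕ)) + pt n 3 * ((e / s : ℕ) - (a / s : ℕ)) := by
  have h3 : (3 : ZMod 3) = 0 := by decide
  rw [pt_zero', pt_one', pt_two', pt_three', affd, ZMod.natCast_mod]
  simp only [Nat.cast_add, Nat.cast_mul, ZMod.natCast_mod, Nat.cast_one, Nat.cast_ofNat]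
  generalize ((a / s : ℕ) : ZMod 3) = a'
  generalize ((b / s : ℕ) : ZMod 3) = b'
  generalize ((c / s : ℕ) : ZMod 3) = c'
  generalize ((d / s : ℕ) : ZMod 3) = d'
  generalize ((e / s : ℕ) : ZMod 3) = e'
  generalize ((n : ℕ) : ZMod 3) = n0
  generalize ((n / 3 : ℕ) : ZMod 3) = n1
  generalize ((n / 9 : ℕ) : ZMod 3) = n2
  generalize ((n / 27 : ℕ) : ZMod 3) = n3
  linear_combination (a' * (n0 + n1 + n2 + n3)) * h3

theorem affd_lt (s a b c d e n : ℕ) : affd s a b c d e n < 3 := Nat.mod_lt _ (by norm_num)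

/-- The affine map taking the standard frame to the points with the given codes. -/
def affV (a b c d e : ℕ) (x : V) : V :=
  pt a + x 0 • (pt b - pt a) + x 1 • (pt c - pt a) + x 2 • (pt d - pt a) + x 3 • (pt e - pt a)

theorem pt_affc (a b c d e n : ℕ) : pt (affc [a, b, c, d, e] n) = affV a b c d e (pt n) := by
  have l1 := affd_lt 1 a b c d e n
  have l2 := affd_lt 3 a b c d e n
  have l3 := affd_lt 9 a b c d e n
  have l4 := affd_lt 27 a b c d e n
  have key : ∀ k l : ℕ, k % 3 = l % 3 → (k : ZMod 3) = (l : ZMod 3) := by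
    intro k l h
    exact (ZMod.natCast_eq_natCast_iff' k l 3).2 h
  funext i
  fin_cases i
  · change ((affc [a, b, c, d, e] n : ℕ) : ZMod 3) = affV a b c d e (pt n) 0
    rw [key _ (affd 1 a b c d e n) (by simp only [affc]; omega), affd_cast]
    simp [affV, pt_zero']
  · change ((affc [a, b, c, d, e] n / 3 : ℕ) : ZMod 3) = affV a b c d e (pt n) 1
    rw [key _ (affd 3 a b c d e n) (by simp only [affc]; omega), affd_cast]
    simp [affV, pt_one']
  · change ((affc [a, b, c, d, e] n / 9 : ℕ) : ZMod 3) = affV a b c d e (pt n) 2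
    rw [key _ (affd 9 a b c d e n) (by simp only [affc]; omega), affd_cast]
    simp [affV, pt_two']
  · change ((affc [a, b, c, d, e] n / 27 : ℕ) : ZMod 3) = affV a b c d e (pt n) 3
    rw [key _ (affd 27 a b c d e n) (by simp only [affc]; omega), affd_cast]
    simp [affV, pt_three']

theorem affc_lt (t : List ℕ) (n : ℕ) : affc t n < 81 := by
  unfold affc
  split
  · rename_i a b c d e
    have l1 := affd_lt 1 a b c d e n
    have l2 := affd_lt 3 a b c d e n
    have l3 := affd_lt 9 a b c d e n
    have l4 := affd_lt 27 a b c d e n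
    omega
  · omega

theorem affOk_surj {t : List ℕ} (h : affOk t = true) {m : ℕ} (hm : m < 81) :
    ∃ n < 81, affc t n = m := by
  have key : ∀ l : List ℕ, (l.foldr (fun n r => Nat.lor r (Nat.pow 2 (affc t n))) 0).testBit m = true →
      ∃ n ∈ l, affc t n = m := by
    intro l
    induction l with
    | nil => intro h; simp at h
    | cons n l ih =>
      intro h
      have h' : ((l.foldr (fun n r => Nat.lor r (Nat.pow 2 (affc t n))) 0) |||
        (2 ^ (affc t n))).testBit m = true := h
      rw [Nat.testBit_or, Bool.or_eq_true, Nat.testBit_two_pow] at h'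
      rcases h' with h' | h'
      · obtain ⟨k, hk, hk'⟩ := ih h'
        exact ⟨k, by simp [hk], hk'⟩
      · exact ⟨n, by simp, by simpa using h'⟩
  rw [affOk, Nat.beq_eq] at h
  obtain ⟨n, hn, hn'⟩ := key (List.range 81) (by rw [h, Nat.testBit_two_pow_sub_one]; simpa using hm)
  exact ⟨n, List.mem_range.1 hn, hn'⟩

theorem exists_aff {t : List ℕ} (h : affOk t = true) :
    ∃ e : V ≃ V, Good e ∧ ∀ x, code (e x) = affc t (code x) := by
  have hl : ∃ a b c d e, t = [a, b, c, d, e] := by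
    obtain ⟨n, _, hn⟩ := affOk_surj h (m := 1) (by norm_num)
    unfold affc at hn
    split at hn
    · exact ⟨_, _, _, _, _, rfl⟩
    · simp at hn
  obtain ⟨a, b, c, d, e, rfl⟩ := hl
  have hs : Function.Surjective (affV a b c d e) := by
    intro y
    obtain ⟨n, hn, hn'⟩ := affOk_surj h (code_lt y)
    refine ⟨pt n, ?_⟩
    rw [← pt_affc, hn', pt_code]
  refine ⟨Equiv.ofBijective _ (Finite.surjective_iff_bijective.1 hs), ?_, ?_⟩
  · apply good_of_affine
    intro x y
    simp only [Equiv.ofBijective_apply, affV, Pi.add_apply, Pi.zero_apply, zero_smul, add_smul]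
    abel
  · intro x
    simp only [Equiv.ofBijective_apply]
    conv_lhs => rw [← pt_code x, ← pt_affc]
    exact code_pt (affc_lt _ _)

theorem eqv_of_mapsTo {t : List ℕ} {m m' : ℕ} (h : affOk t = true) (h' : mapsTo t m m' = true) :
    Eqv (toSet m) (toSet m') := by
  obtain ⟨e, he, hc⟩ := exists_aff h
  refine ⟨e, he, fun x => ?_⟩
  rw [mem_toSet, mem_toSet, hc, mapsTo_apply h' (code_lt x)]

/-- Equivalence under collineations that preserve the last coordinate. -/
def Lay (S S' : Finset V) : Prop :=
  ∃ e : V ≃ V, Good e ∧ (∀ x, e x 3 = x 3) ∧ ∀ x, x ∈ S ↔ e x ∈ S'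

def lay (S : Finset V) (c : ZMod 3) : Finset V := S.filter fun x => x 3 = c

theorem mem_lay {S : Finset V} {c : ZMod 3} {x : V} : x ∈ lay S c ↔ x ∈ S ∧ x 3 = c := by
  simp [lay]

theorem Lay.refl (S : Finset V) : Lay S S := ⟨Equiv.refl V, Good.refl, fun _ => rfl, fun _ => Iff.rfl⟩

theorem Lay.trans {S S' S'' : Finset V} (h : Lay S S') (h' : Lay S' S'') : Lay S S'' := by
  obtain ⟨e, he, h3, h⟩ := h
  obtain ⟨f, hf, hf3, h'⟩ := h'
  exact ⟨e.trans f, he.trans hf, fun x => (hf3 _).trans (h3 x), fun x => (h x).trans (h' _)⟩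

theorem Lay.eqv {S S' : Finset V} (h : Lay S S') : Eqv S S' := by
  obtain ⟨e, he, _, h⟩ := h
  exact ⟨e, he, h⟩

theorem Lay.card {S S' : Finset V} (h : Lay S S') (c : ZMod 3) : (lay S c).card = (lay S' c).card := by
  obtain ⟨e, he, h3, h⟩ := h
  apply Finset.card_equiv e
  intro x
  rw [mem_lay, mem_lay, h3, h]

theorem lay_map {e : V ≃ V} (he : Good e) (h3 : ∀ x, e x 3 = x 3) (S : Finset V) :
    Lay S (S.map e.toEmbedding) := ⟨e, he, h3, mem_map_equiv e S⟩

theorem sq_one {a : ZMod 3} (h : a ≠ 0) : a * a = 1 := by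
  revert a; decide

theorem frame_step (k j : Fin 4) (u : V) (hu3 : u 3 = 0) (hk : k ≠ 3) (hj : j ≠ 3) (hkj : k ≤ j)
    (hu : u j ≠ 0) : ∃ e : V ≃ V, Good e ∧ (∀ x, e x 3 = x 3) ∧ e u = Pi.single k 1 ∧ e 0 = 0 ∧
      ∀ i < k, e (Pi.single i 1) = Pi.single i 1 := by
  have hsq := sq_one hu
  let g : V → V := fun x => x + (x j * u j) • ((Pi.single j 1 : V) - u)
  have gj : ∀ x, g x j = x j * u j := by
    intro x
    simp only [g, Pi.add_apply, Pi.smul_apply, Pi.sub_apply, Pi.single_eq_same, smul_eq_mul]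
    linear_combination (-x j) * hsq
  obtain ⟨e, he, hf⟩ := good_of_linear (fun x => (g x) ∘ Equiv.swap j k) (by
    intro x y
    funext i
    simp only [g, Function.comp, Pi.add_apply, Pi.smul_apply, smul_eq_mul]
    ring) (by
    intro x hx
    have h1 : g x = 0 := by
      funext i
      have := congrFun hx (Equiv.swap j k i)
      simpa using this
    have h2 : x j = 0 := by
      have := gj x
      rw [h1] at this
      have h3 : x j * u j * u j = 0 := by rw [← this]; simp
      rw [mul_assoc, hsq, mul_one] at h3
      exact h3
    simpa [g, h2] using h1)
  refine ⟨e, he, ?_, ?_, ?_, ?_⟩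
  · intro x
    rw [hf]
    simp only [Function.comp]
    rw [Equiv.swap_apply_of_ne_of_ne hj.symm hk.symm]
    simp [g, hu3, Pi.single_eq_of_ne hj.symm]
  · rw [hf]
    have : g u = Pi.single j 1 := by
      simp only [g, hsq, one_smul]; abel
    rw [this]
    funext i
    simp only [Function.comp, Pi.single_apply]
    congr 1
    rw [Equiv.swap_apply_eq_iff]
    simp
  · rw [hf]
    funext i
    simp [g]
  · intro i hi
    rw [hf]
    have hij : i ≠ j := (hi.trans_le hkj).ne
    have hik : i ≠ k := hi.ne
    have : g (Pi.single i 1) = Pi.single i 1 := by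
      simp [g, Pi.single_eq_of_ne hij.symm]
    rw [this]
    funext l
    simp only [Function.comp, Pi.single_apply]
    congr 1
    rw [Equiv.swap_apply_eq_iff, Equiv.swap_apply_of_ne_of_ne hij hik]

theorem pt_single : pt 0 = 0 ∧ pt 1 = Pi.single 0 1 ∧ pt 3 = Pi.single 1 1 ∧ pt 9 = Pi.single 2 1 := by
  decide

theorem code_of_two {x : V} (h2 : x 2 = 0) (h3 : x 3 = 0) : code x = (x 0).val + 3 * (x 1).val := by
  simp [code, h2, h3]

theorem frame {S : Finset V} (hS : IsCap S) (h9 : 9 ≤ (lay S 0).card) :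
    ∃ S', Lay S S' ∧ pt 0 ∈ S' ∧ pt 1 ∈ S' ∧ pt 3 ∈ S' ∧ pt 9 ∈ S' := by
  obtain ⟨e0, e1, e3, e9⟩ := pt_single
  -- first point
  obtain ⟨p, hp⟩ : (lay S 0).Nonempty := Finset.card_pos.1 (by omega)
  rw [mem_lay] at hp
  obtain ⟨S1, h1, z1⟩ : ∃ S', Lay S S' ∧ pt 0 ∈ S' := by
    refine ⟨_, lay_map (good_translate (-p)) ?_ S, ?_⟩
    · intro x; simp [hp.2]
    · have := (mem_map_equiv (Equiv.addRight (-p)) S p).1 hp.1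
      have h0 : Equiv.addRight (-p) p = 0 := by simp
      rwa [h0, ← e0] at this
  have c1 := h1.eqv.isCap hS
  have k1 : 9 ≤ (lay S1 0).card := h1.card 0 ▸ h9
  -- second point
  obtain ⟨q, hq, hq0⟩ : ∃ q ∈ lay S1 0, q ≠ 0 := Finset.exists_mem_ne (by omega) 0
  rw [mem_lay] at hq
  obtain ⟨S2, h2, z2, o2⟩ : ∃ S', Lay S1 S' ∧ pt 0 ∈ S' ∧ pt 1 ∈ S' := by
    obtain ⟨j, hj⟩ := Function.ne_iff.1 hq0
    have hj3 : j ≠ 3 := by rintro rfl; exact hj hq.2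
    obtain ⟨e, he, l3, eu, ez, _⟩ := frame_step 0 j q hq.2 (by decide) hj3 (Fin.zero_le _) hj
    refine ⟨_, lay_map he l3 S1, ?_, ?_⟩
    · have := (mem_map_equiv e S1 _).1 z1
      rwa [e0, ez, ← e0] at this
    · have := (mem_map_equiv e S1 _).1 hq.1
      rwa [eu, ← e1] at this
  have c2 := h2.eqv.isCap c1
  have k2 : 9 ≤ (lay S2 0).card := h2.card 0 ▸ k1
  -- third point
  obtain ⟨S3, h3, z3, o3, t3⟩ : ∃ S', Lay S2 S' ∧ pt 0 ∈ S' ∧ pt 1 ∈ S' ∧ pt 3 ∈ S' := by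
    obtain ⟨r, hr, j, hj3, hj, hrj⟩ :
        ∃ r ∈ lay S2 0, ∃ j : Fin 4, j ≠ 3 ∧ 1 ≤ j ∧ r j ≠ 0 := by
      by_contra hcon
      push Not at hcon
      have hsub : lay S2 0 ⊆ toSet 7 := by
        intro x hx
        have hx1 := hcon x hx 1 (by decide) (by decide)
        have hx2 := hcon x hx 2 (by decide) (by decide)
        rw [mem_lay] at hx
        rw [mem_toSet, code_of_two hx2 hx.2, hx1]
        have := ZMod.val_lt (x 0)
        rw [ZMod.val_zero]
        interval_cases (x 0).val <;> decide
      have hle := Finset.card_le_card hsub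
      rw [card_toSet] at hle
      have : pop 81 7 = 3 := by decide +kernel
      omega
    rw [mem_lay] at hr
    obtain ⟨e, he, l3, eu, ez, es⟩ := frame_step 1 j r hr.2 (by decide) hj3 hj hrj
    refine ⟨_, lay_map he l3 S2, ?_, ?_, ?_⟩
    · have := (mem_map_equiv e S2 _).1 z2
      rwa [e0, ez, ← e0] at this
    · have := (mem_map_equiv e S2 _).1 o2
      rwa [e1, es 0 (by decide), ← e1] at this
    · have := (mem_map_equiv e S2 _).1 hr.1
      rwa [eu, ← e3] at this
  have c3 := h3.eqv.isCap c2
  have k3 : 9 ≤ (lay S3 0).card := h3.card 0 ▸ k2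
  -- fourth point
  obtain ⟨r, hr, hr2⟩ : ∃ r ∈ lay S3 0, r 2 ≠ 0 := by
    by_contra hcon
    push Not at hcon
    have hsub : lay S3 0 ⊆ toSet 507 := by
      intro x hx
      have hx2 := hcon x hx
      rw [mem_lay] at hx
      have hc := code_of_two hx2 hx.2
      have a0 := ZMod.val_lt (x 0)
      have a1 := ZMod.val_lt (x 1)
      have hlt : code x < 9 := by omega
      have hne : code x ≠ 2 := by
        intro h
        have h' : pt (third 0 1) ∈ S3 := by
          have : third 0 1 = code x := by rw [h]; decide
          rw [this, pt_code]; exact hx.1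
        have := third_eq_of_cap c3 (by norm_num) (by norm_num) z3 o3 h'
        omega
      rw [mem_toSet]
      generalize code x = n at *
      interval_cases n <;> first | decide | omega
    have hle := Finset.card_le_card hsub
    rw [card_toSet] at hle
    have : pop 81 507 = 8 := by decide +kernel
    omega
  rw [mem_lay] at hr
  obtain ⟨e, he, l3, eu, ez, es⟩ := frame_step 2 2 r hr.2 (by decide) (by decide) le_rfl hr2
  refine ⟨_, h1.trans (h2.trans (h3.trans (lay_map he l3 S3))), ?_, ?_, ?_, ?_⟩
  · have := (mem_map_equiv e S3 _).1 z3
    rwa [e0, ez, ← e0] at this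
  · have := (mem_map_equiv e S3 _).1 o3
    rwa [e1, es 0 (by decide), ← e1] at this
  · have := (mem_map_equiv e S3 _).1 t3
    rwa [e3, es 1 (by decide), ← e3] at this
  · have := (mem_map_equiv e S3 _).1 hr.1
    rwa [eu, ← e9] at this

theorem bm1_testBit {p n : ℕ} (h : (bm1 p).testBit n = true) : n = p := by
  have h' : (2 ^ p).testBit n = true := h
  rw [Nat.testBit_two_pow] at h'
  simpa using (of_decide_eq_true h').symm

theorem refl_sound {S : Finset V} (hS : IsCap S) {p ch n : ℕ} (hp : p < 81) (hn : n < 81)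
    (h1 : pt p ∈ S) (hch : ∀ n, ch.testBit n = true → pt n ∈ S) (h2 : pt n ∈ S)
    (h : (refl p ch).testBit n = true) : ch.testBit n = true := by
  rw [refl_testBit _ _ _ hn] at h
  have h3 := third_eq_of_cap hS hp hn h1 h2 (hch _ h)
  rwa [h3.2] at h

theorem clean_sound {S : Finset V} (hS : IsCap S) {ch n : ℕ} (hn : n < 81)
    (hch : ∀ n, ch.testBit n = true → pt n ∈ S) (h2 : pt n ∈ S) (hnc : ¬ ch.testBit n = true)
    (cand : ℕ) (hc : cand.testBit n = true) :
    ∀ ps : List ℕ, (∀ p ∈ ps, p < 81 ∧ pt p ∈ S) → (clean ps ch cand).testBit n = true := by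
  intro ps
  induction ps with
  | nil => intro _; exact hc
  | cons p ps ih =>
    intro h
    have h' : clean (p :: ps) ch cand = rem (clean ps ch cand) (refl p ch) := rfl
    rw [h', rem_testBit, ih fun q hq => h q (by simp [hq])]
    obtain ⟨hp, hpS⟩ := h p (by simp)
    have : ¬ (refl p ch).testBit n = true := fun hr => hnc (refl_sound hS hp hn hpS hch h2 hr)
    simp [this]

theorem lt_of_testBit {m n k : ℕ} (hm : m < 2 ^ k) (h : m.testBit n = true) : n < k := by
  by_contra hcon
  have : m.testBit n = false := Nat.testBit_lt_two_pow (hm.trans_le (Nat.pow_le_pow_right (by norm_num) (by omega)))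
  simp [this] at h

theorem code_lt27 {x : V} : code x < 27 ↔ x 3 = 0 := by
  have h0 := ZMod.val_lt (x 0)
  have h1 := ZMod.val_lt (x 1)
  have h2 := ZMod.val_lt (x 2)
  rw [← ZMod.val_eq_zero]
  unfold code; omega

theorem card_lay_zero (S : Finset V) :
    (lay S 0).card = ((Finset.range 27).filter fun n => pt n ∈ S).card := by
  apply Finset.card_bij (fun x _ => code x)
  · intro x hx
    rw [mem_lay] at hx
    simp only [Finset.mem_filter, Finset.mem_range, pt_code]
    exact ⟨code_lt27.2 hx.2, hx.1⟩
  · intro x _ y _ h; exact code_inj h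
  · intro n hn
    simp only [Finset.mem_filter, Finset.mem_range] at hn
    have hc : code (pt n) = n := code_pt (by omega)
    refine ⟨pt n, mem_lay.2 ⟨hn.2, code_lt27.1 (by rw [hc]; exact hn.1)⟩, hc⟩

theorem layer {S : Finset V} (hS : IsCap S) (h9 : 9 ≤ (lay S 0).card) :
    ∃ S', Lay S S' ∧ ∃ e ∈ capTable, ∀ x : V, x 3 = 0 → (x ∈ S' ↔ e.1.testBit (code x) = true) := by
  obtain ⟨S', hl, h0, h1, h3, h10⟩ := frame hS h9
  have c := hl.eqv.isCap hS
  have k : 9 ≤ (lay S' 0).card := hl.card 0 ▸ h9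
  refine ⟨S', hl, ?_⟩
  rw [card_lay_zero] at k
  let T : ℕ → Prop := fun n => n < 27 ∧ pt n ∈ S'
  have hch : ∀ n, (523 : ℕ).testBit n = true → T n := by
    intro n hn
    have : n < 10 := lt_of_testBit (by norm_num) hn
    interval_cases n
    · exact ⟨by norm_num, h0⟩
    · exact ⟨by norm_num, h1⟩
    · exfalso; revert hn; decide
    · exact ⟨by norm_num, h3⟩
    all_goals first | (exfalso; revert hn; decide) | exact ⟨by norm_num, h10⟩
  obtain ⟨m, hm, hT⟩ := run_sound (T := T) (pre := pre9) (bm := bm1) (cl := refl) (leaf := leafA)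
    (by
      intro ch cand hp hi
      rw [pre9, Nat.ble_eq, pop_eq] at hp
      have hsub : ((Finset.range 27).filter fun n => pt n ∈ S') ⊆
          (Finset.range 27).filter fun n => (Nat.lor ch cand).testBit n = true := by
        intro n hn
        simp only [Finset.mem_filter, Finset.mem_range] at hn ⊢
        refine ⟨hn.1, ?_⟩
        have e : Nat.lor ch cand = ch ||| cand := rfl
        rw [e, Nat.testBit_or, Bool.or_eq_true]
        exact hi.2 n hn
      have := Finset.card_le_card hsub
      omega)
    (by
      intro p n _ h
      rw [bm1_testBit h])
    (by
      intro p ch _ hp hch n hn h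
      exact refl_sound c (by have := hp.1; omega) (by have := hn.1; omega) hp.2
        (fun n hn => (hch n hn).2) hn.2 h)
    30 [] 523 (clean [0, 1, 3, 9] 523 mk30) (by simp)
    (by
      refine ⟨hch, fun n hn => ?_⟩
      by_cases hb : (523 : ℕ).testBit n = true
      · exact Or.inl hb
      right
      refine clean_sound c (by have := hn.1; omega) (fun n hn => (hch n hn).2) hn.2 hb _ ?_ _ ?_
      · have e : mk30 = 2 ^ 27 - 1 := by decide
        rw [e, Nat.testBit_two_pow_sub_one]
        simpa using hn.1
      · intro p hp
        simp only [List.mem_cons, List.not_mem_nil, or_false] at hp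
        rcases hp with rfl | rfl | rfl | rfl
        · exact ⟨by norm_num, h0⟩
        · exact ⟨by norm_num, h1⟩
        · exact ⟨by norm_num, h3⟩
        · exact ⟨by norm_num, h10⟩) runA
  rw [leafA, List.any_eq_true] at hm
  obtain ⟨e, he, hem⟩ := hm
  rw [Nat.beq_eq] at hem
  refine ⟨e, he, fun x hx => ?_⟩
  have := hT (code x)
  rw [hem, ← this]
  simp only [T, pt_code, code_lt27.2 hx, true_and]

theorem capTable_ok : (capTable.all fun e => Nat.beq (pop 27 e.1) 9 && affOk e.2 &&
    ((List.range 81).all fun n => Nat.beq (affc e.2 n / 27) (n / 27)) &&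
    ((List.range 27).all fun n => e.1.testBit n == capA.testBit (affc e.2 n))) = true := by
  decide +kernel

/-- Every cap meets the hyperplane with last coordinate zero in at most nine points. -/
theorem card_lay_le {S : Finset V} (hS : IsCap S) : (lay S 0).card ≤ 9 := by
  by_contra hcon
  obtain ⟨S', hl, e, he, h⟩ := layer hS (by omega)
  have h1 := List.all_eq_true.1 capTable_ok e he
  simp only [Bool.and_eq_true, Nat.beq_eq] at h1
  have h2 := h1.1.1.1
  rw [pop_eq] at h2
  rw [hl.card 0, card_lay_zero] at hcon
  apply hcon
  rw [← h2]
  apply Finset.card_le_card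
  intro n hn
  simp only [Finset.mem_filter, Finset.mem_range] at hn ⊢
  refine ⟨hn.1, ?_⟩
  have hc : code (pt n) = n := code_pt (by omega)
  have h3 : pt n 3 = 0 := code_lt27.1 (by rw [hc]; exact hn.1)
  have := (h _ h3).1 hn.2
  rwa [hc] at this

/-- A cap with nine points in the hyperplane with last coordinate zero can be moved so that this part
is the standard one. -/
theorem layer_std {S : Finset V} (hS : IsCap S) (h9 : 9 ≤ (lay S 0).card) :
    ∃ S', Lay S S' ∧ ∀ x : V, x 3 = 0 → (x ∈ S' ↔ capA.testBit (code x) = true) := by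
  obtain ⟨S', hl, e, he, h⟩ := layer hS h9
  have h1 := List.all_eq_true.1 capTable_ok e he
  simp only [Bool.and_eq_true, List.all_eq_true, List.mem_range, Nat.beq_eq, beq_iff_eq] at h1
  obtain ⟨⟨⟨-, h2⟩, h3⟩, h4⟩ := h1
  obtain ⟨f, hf, hc⟩ := exists_aff h2
  have hdiv : ∀ x : V, code x / 27 = (x 3).val := by
    intro x
    have h0 := ZMod.val_lt (x 0)
    have h1 := ZMod.val_lt (x 1)
    have h2 := ZMod.val_lt (x 2)
    unfold code; omega
  have hf3 : ∀ x, f x 3 = x 3 := by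
    intro x
    apply ZMod.val_injective
    rw [← hdiv, ← hdiv, hc, h3 _ (code_lt x)]
  refine ⟨_, hl.trans (lay_map hf hf3 S'), fun x hx => ?_⟩
  obtain ⟨y, rfl⟩ := f.surjective x
  rw [← mem_map_equiv, h y ((hf3 y).symm.trans hx), hc]
  rw [h4 _ (code_lt27.2 ((hf3 y).symm.trans hx))]

/-- The standard bilinear form. -/
def dot (w x : V) : ZMod 3 := ∑ i, w i * x i

theorem dot_add (w x y : V) : dot w (x + y) = dot w x + dot w y := by
  simp [dot, mul_add, Finset.sum_add_distrib]

theorem dot_sub (w x y : V) : dot w (x - y) = dot w x - dot w y := by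
  simp [dot, mul_sub, Finset.sum_sub_distrib]

theorem dot_zero_left (x : V) : dot 0 x = 0 := by simp [dot]

theorem dot_zero_right (x : V) : dot x 0 = 0 := by simp [dot]

theorem add_dot (w x y : V) : dot (w + x) y = dot w y + dot x y := by
  simp [dot, add_mul, Finset.sum_add_distrib]

theorem exists_coord {w : V} (hw : w ≠ 0) (a c : ZMod 3) (ha : a ≠ 0) :
    ∃ e : V ≃ V, Good e ∧ ∀ x, e x 3 = a * (dot w x - c) := by
  obtain ⟨i, hi⟩ := Function.ne_iff.1 hw
  obtain ⟨e, he, hf⟩ := good_of_linear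
    (fun x => Function.update (x ∘ Equiv.swap i 3) 3 (a * dot w x)) (by
      intro x y
      funext l
      by_cases hl : l = 3
      · subst hl; simp [dot_add, mul_add]
      · simp [hl]) (by
      intro x hx
      have h1 : ∀ j, j ≠ i → x j = 0 := by
        intro j hj
        have hl : Equiv.swap i 3 j ≠ 3 := by
          rw [Ne, Equiv.swap_apply_eq_iff, Equiv.swap_apply_right]; exact hj
        have := congrFun hx (Equiv.swap i 3 j)
        simpa [Function.update_of_ne hl] using this
      have h2 : a * dot w x = 0 := by
        have := congrFun hx 3
        simpa using this
      have h3 : dot w x = w i * x i := by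
        apply Finset.sum_eq_single i
        · intro j _ hj; rw [h1 j hj, mul_zero]
        · simp
      funext j
      by_cases hj : j = i
      · subst hj
        have h4 : w j ≠ 0 := hi
        rw [h3] at h2
        have key : ∀ a b c : ZMod 3, a ≠ 0 → b ≠ 0 → a * (b * c) = 0 → c = 0 := by decide
        exact key _ _ _ ha h4 h2
      · exact h1 j hj)
  refine ⟨e.trans (Equiv.addRight (Pi.single 3 (-(a * c)))), he.trans (good_translate _), fun x => ?_⟩
  simp [hf]
  ring

/-- The number of points of `S` in a hyperplane. -/
def nn (S : Finset V) (w : V) (c : ZMod 3) : ℕ := (S.filter fun x => dot w x = c).card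

theorem nn_eq_lay {S : Finset V} {w : V} {a c : ZMod 3} {e : V ≃ V}
    (h : ∀ x, e x 3 = a * (dot w x - c)) (ha : a ≠ 0) (b : ZMod 3) :
    nn S w b = (lay (S.map e.toEmbedding) (a * (b - c))).card := by
  apply Finset.card_equiv e
  intro x
  rw [mem_lay, ← mem_map_equiv, h, Finset.mem_filter]
  have key : ∀ a b c d : ZMod 3, a ≠ 0 → (d = b ↔ a * (d - c) = a * (b - c)) := by decide
  rw [key a b c (dot w x) ha]

theorem nn_le {S : Finset V} (hS : IsCap S) {w : V} (hw : w ≠ 0) (c : ZMod 3) : nn S w c ≤ 9 := by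
  obtain ⟨e, he, h⟩ := exists_coord hw 1 c (by decide)
  rw [nn_eq_lay h (by decide) c, sub_self, mul_zero]
  exact card_lay_le ((he.eqv_map S).isCap hS)

theorem univ3 : (Finset.univ : Finset (ZMod 3)) = {0, 1, 2} := by decide

theorem nn_sum (S : Finset V) (w : V) : nn S w 0 + nn S w 1 + nn S w 2 = S.card := by
  have h := Finset.card_eq_sum_card_fiberwise (f := fun x => dot w x) (s := S)
    (t := (Finset.univ : Finset (ZMod 3))) (by intro x _; simp)
  rw [h, univ3, Finset.sum_insert (by decide), Finset.sum_insert (by decide), Finset.sum_singleton]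
  simp only [nn]; ring

/-- Indicator function. -/
def ind (p : Prop) [Decidable p] : ℤ := if p then 1 else 0

theorem nn_ind (S : Finset V) (w : V) (c : ZMod 3) : (nn S w c : ℤ) = ∑ x ∈ S, ind (dot w x = c) := by
  simp [nn, ind]

theorem card_V : Fintype.card V = 81 := by simp [ZMod.card]

theorem sum_ind_dot (d : V) : ∑ w : V, ind (dot w d = 0) = 27 + 54 * ind (d = 0) := by
  by_cases hd : d = 0
  · subst hd
    have h : ∀ w : V, ind (dot w 0 = 0) = 1 := fun w => by simp [ind, dot_zero_right]
    simp only [h, Finset.sum_const, Finset.card_univ, card_V]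
    simp [ind]
  · obtain ⟨i, hi⟩ := Function.ne_iff.1 hd
    have hi' : d i ≠ 0 := hi
    have hdot : ∀ t : ZMod 3, dot (Pi.single i t) d = t * d i := by
      intro t
      unfold dot
      rw [Finset.sum_eq_single i]
      · simp
      · intro j _ hj; simp [hj]
      · simp
    have hs : ∀ t : ZMod 3, ∑ w : V, ind (dot w d = 0) = ∑ w : V, ind (dot w d = t * d i) := by
      intro t
      rw [← Equiv.sum_comp (Equiv.subRight (Pi.single i t : V)) fun w => ind (dot w d = 0)]
      apply Finset.sum_congr rfl
      intro w _
      have : dot w d = dot (w - Pi.single i t) d + t * d i := by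
        rw [← hdot, ← add_dot, sub_add_cancel]
      simp only [Equiv.subRight_apply, this, add_eq_right, ind]
    have h1 := hs 1
    have h2 := hs 2
    have key : ∀ a b : ZMod 3, b ≠ 0 → ind (a = 0) + ind (a = 1 * b) + ind (a = 2 * b) = 1 := by
      decide
    have h3 : ∑ w : V, (ind (dot w d = 0) + ind (dot w d = 1 * d i) + ind (dot w d = 2 * d i))
        = 81 := by
      simp only [key _ _ hi', Finset.sum_const, Finset.card_univ, card_V]
      simp
    rw [Finset.sum_add_distrib, Finset.sum_add_distrib, ← h1, ← h2] at h3
    have h4 : ind (d = 0) = 0 := by simp [ind, hd]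
    rw [h4]
    linarith

theorem second_moment (S : Finset V) :
    ∑ w : V, ∑ c : ZMod 3, (nn S w c : ℤ) ^ 2 = 27 * S.card ^ 2 + 54 * S.card := by
  have key : ∀ a b : ZMod 3, ∑ c : ZMod 3, ind (a = c) * ind (b = c) = ind (a - b = 0) := by decide
  have h1 : ∀ w : V, ∑ c : ZMod 3, (nn S w c : ℤ) ^ 2 =
      ∑ x ∈ S, ∑ y ∈ S, ind (dot w (x - y) = 0) := by
    intro w
    simp only [nn_ind, sq, Finset.sum_mul_sum]
    rw [Finset.sum_comm]
    refine Finset.sum_congr rfl fun x _ => ?_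
    rw [Finset.sum_comm]
    refine Finset.sum_congr rfl fun y _ => ?_
    rw [key, dot_sub]
  simp only [h1]
  rw [Finset.sum_comm]
  have h2 : ∀ x ∈ S, ∑ w : V, ∑ y ∈ S, ind (dot w (x - y) = 0) = 27 * S.card + 54 := by
    intro x hx
    rw [Finset.sum_comm]
    simp only [sum_ind_dot, Finset.sum_add_distrib, ← Finset.mul_sum, Finset.sum_const]
    have : ∑ y ∈ S, ind (x - y = 0) = 1 := by
      simp [ind, sub_eq_zero, hx]
    rw [this]
    simp; ring
  rw [Finset.sum_congr rfl h2, Finset.sum_const]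
  simp; ring

theorem third_moment {S : Finset V} (hS : IsCap S) :
    3 * ∑ w : V, ∑ c : ZMod 3, (nn S w c : ℤ) ^ 3
      = 27 * S.card ^ 3 + 162 * S.card ^ 2 + 54 * S.card := by
  have key : ∀ a b d : ZMod 3, ∑ c : ZMod 3, ind (a = c) * ind (b = c) * ind (d = c) =
      ind (a - b = 0) * ind (a - d = 0) := by decide
  have key2 : ∀ a b : ZMod 3, 3 * (ind (a = 0) * ind (b = 0)) =
      ind (a = 0) + ind (b = 0) + ind (a + b = 0) + ind (a - b = 0) - 1 := by decide
  have h1 : ∀ w : V, ∑ c : ZMod 3, (nn S w c : ℤ) ^ 3 =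
      ∑ x ∈ S, ∑ y ∈ S, ∑ z ∈ S, ind (dot w (x - y) = 0) * ind (dot w (x - z) = 0) := by
    intro w
    simp only [nn_ind, pow_succ, pow_zero, one_mul, Finset.sum_mul_sum]
    simp only [Finset.sum_mul]
    rw [Finset.sum_comm]
    refine Finset.sum_congr rfl fun x _ => ?_
    rw [Finset.sum_comm]
    refine Finset.sum_congr rfl fun y _ => ?_
    rw [Finset.sum_comm]
    refine Finset.sum_congr rfl fun z _ => ?_
    rw [key, dot_sub, dot_sub, mul_comm]
  have h2 : ∀ x y z : V, 3 * ∑ w : V, ind (dot w (x - y) = 0) * ind (dot w (x - z) = 0) =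
      27 + 54 * (ind (x = y) + ind (x = z) + ind (y = z) + ind (x + y + z = 0)) := by
    intro x y z
    rw [Finset.mul_sum]
    simp only [key2, Finset.sum_sub_distrib, Finset.sum_add_distrib, ← dot_add, ← dot_sub, sum_ind_dot]
    have e1 : ind (x - y = 0) = ind (x = y) := by simp only [ind, sub_eq_zero]
    have e2 : ind (x - z = 0) = ind (x = z) := by simp only [ind, sub_eq_zero]
    have e3 : ind (x - y - (x - z) = 0) = ind (y = z) := by
      have : (x - y - (x - z) = 0) ↔ y = z := by
        rw [sub_sub_sub_cancel_left, sub_eq_zero]; exact eq_comm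
      simp only [ind, this]
    have e4 : ind (x - y + (x - z) = 0) = ind (x + y + z = 0) := by
      have : (x - y + (x - z) = 0) ↔ x + y + z = 0 := by
        have h3 := three_smul' x
        have : x - y + (x - z) = - (x + y + z) := by
          rw [eq_neg_iff_add_eq_zero]
          rw [← h3]; abel
        rw [this, neg_eq_zero]
      simp only [ind, this]
    rw [e1, e2, e3, e4]
    have h81 : ∑ _w : V, (1 : ℤ) = 81 := by
      rw [Finset.sum_const, Finset.card_univ, card_V]; simp
    rw [h81]; ring
  have h3 : ∀ x ∈ S, ∀ y ∈ S, ∑ z ∈ S, ind (x + y + z = 0) = ind (x = y) := by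
    intro x hx y hy
    by_cases hxy : x = y
    · subst hxy
      rw [Finset.sum_eq_single x]
      · simp [ind, three_smul']
      · intro z _ hz
        have : ¬ x + x + z = 0 := fun h => hz (eq_of_add_self h)
        simp [ind, this]
      · intro h; exact absurd hx h
    · have : ind (x = y) = 0 := by simp [ind, hxy]
      rw [this]
      apply Finset.sum_eq_zero
      intro z hz
      have : ¬ x + y + z = 0 := fun h => hxy (cap_eq_of_sum hS hx hy hz h).1
      simp [ind, this]
  have h4 : ∀ x ∈ S, ∑ z ∈ S, ind (x = z) = 1 := by
    intro x hx
    simp [ind, hx]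
  simp only [h1]
  rw [Finset.sum_comm, Finset.mul_sum]
  have h5 : ∀ x ∈ S, 3 * ∑ w : V, ∑ y ∈ S, ∑ z ∈ S,
      ind (dot w (x - y) = 0) * ind (dot w (x - z) = 0) = 27 * S.card ^ 2 + 162 * S.card + 54 := by
    intro x hx
    rw [Finset.sum_comm, Finset.mul_sum]
    have h6 : ∀ y ∈ S, 3 * ∑ w : V, ∑ z ∈ S,
      ind (dot w (x - y) = 0) * ind (dot w (x - z) = 0) =
        27 * S.card + 54 * (S.card * ind (x = y) + 1 + 1 + ind (x = y)) := by
      intro y hy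
      rw [Finset.sum_comm, Finset.mul_sum]
      simp only [h2, Finset.sum_add_distrib, ← Finset.mul_sum, h4 x hx, h4 y hy, h3 x hx y hy,
        Finset.sum_const]
      simp; ring
    rw [Finset.sum_congr rfl h6]
    simp only [Finset.sum_add_distrib, ← Finset.mul_sum, h4 x hx, Finset.sum_const]
    simp; ring
  rw [Finset.sum_congr rfl h5, Finset.sum_const]
  simp; ring

/-- The polynomial used as a linear programming certificate. -/
def lp (n : ℕ) : ℤ := 8 * (n : ℤ) ^ 3 - 147 * (n : ℤ) ^ 2 + 139 * n

theorem lp_cases (a : ℕ) (ha : a < 10) (b : ℕ) (hb : b < 10) (c : ℕ) (hc : c < 10)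
    (h : a + b + c = 20) (h' : lp a + lp b + lp c < -9714) :
    (a = 9 ∧ b = 9 ∧ c = 2) ∨ (a = 9 ∧ b = 2 ∧ c = 9) ∨ (a = 2 ∧ b = 9 ∧ c = 9) := by
  have key : ∀ a b c : Fin 10, a.val + b.val + c.val = 20 →
      lp a.val + lp b.val + lp c.val < -9714 → (a = 9 ∧ b = 9 ∧ c = 2) ∨ (a = 9 ∧ b = 2 ∧ c = 9) ∨
        (a = 2 ∧ b = 9 ∧ c = 9) := by
    unfold lp
    decide +kernel
  have := key ⟨a, ha⟩ ⟨b, hb⟩ ⟨c, hc⟩ h h'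
  simp only [Fin.ext_iff] at this
  exact this

theorem exists_992 {S : Finset V} (hS : IsCap S) (h20 : S.card = 20) : ∃ w : V, w ≠ 0 ∧
    ((nn S w 0 = 9 ∧ nn S w 1 = 9 ∧ nn S w 2 = 2) ∨ (nn S w 0 = 9 ∧ nn S w 1 = 2 ∧ nn S w 2 = 9) ∨
      (nn S w 0 = 2 ∧ nn S w 1 = 9 ∧ nn S w 2 = 9)) := by
  by_contra hcon
  push Not at hcon
  have hsum : ∀ w : V, ∑ c : ZMod 3, lp (nn S w c) = lp (nn S w 0) + lp (nn S w 1) + lp (nn S w 2) := by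
    intro w
    rw [univ3, Finset.sum_insert (by decide), Finset.sum_insert (by decide), Finset.sum_singleton]
    ring
  have h1 : ∀ w ∈ Finset.univ.erase (0 : V), -9714 ≤ ∑ c : ZMod 3, lp (nn S w c) := by
    intro w hw
    have hw : w ≠ 0 := Finset.ne_of_mem_erase hw
    by_contra hlt
    push Not at hlt
    rw [hsum] at hlt
    have := lp_cases _ (Nat.lt_succ_of_le (nn_le hS hw 0)) _ (Nat.lt_succ_of_le (nn_le hS hw 1)) _
      (Nat.lt_succ_of_le (nn_le hS hw 2)) ((nn_sum S w).trans h20) hlt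
    have h' := hcon w hw
    tauto
  have h2 := Finset.card_nsmul_le_sum _ _ _ h1
  rw [Finset.card_erase_of_mem (Finset.mem_univ _), Finset.card_univ, card_V] at h2
  have h3 := Finset.add_sum_erase Finset.univ (fun w : V => ∑ c : ZMod 3, lp (nn S w c))
    (Finset.mem_univ 0)
  have h4 : ∑ c : ZMod 3, lp (nn S 0 c) = 7980 := by
    have e0 : nn S 0 0 = 20 := by
      rw [← h20]; unfold nn; congr 1
      rw [Finset.filter_true_of_mem]; intro x _; exact dot_zero_left x
    have hs := nn_sum S 0
    rw [hsum]
    have e1 : nn S 0 1 = 0 := by omega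
    have e2 : nn S 0 2 = 0 := by omega
    rw [e0, e1, e2]; decide
  have h5 : ∑ w : V, ∑ c : ZMod 3, lp (nn S w c) = -769500 := by
    have a1 : ∑ w : V, ∑ c : ZMod 3, (nn S w c : ℤ) = 1620 := by
      have : ∀ w : V, ∑ c : ZMod 3, (nn S w c : ℤ) = 20 := by
        intro w
        rw [univ3, Finset.sum_insert (by decide), Finset.sum_insert (by decide), Finset.sum_singleton]
        have := nn_sum S w
        omega
      simp only [this, Finset.sum_const, Finset.card_univ, card_V]
      simp
    have a2 := second_moment S
    have a3 := third_moment hS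
    rw [h20] at a2 a3
    simp only [lp, Finset.sum_add_distrib, Finset.sum_sub_distrib, ← Finset.mul_sum, a1, a2]
    push_cast at a3 ⊢
    linarith
  rw [h4, h5] at h3
  norm_num at h2
  linarith

theorem exists_layers {S : Finset V} (hS : IsCap S) (h20 : S.card = 20) :
    ∃ S', Eqv S S' ∧ 9 ≤ (lay S' 0).card ∧ (lay S' 2).card = 2 := by
  obtain ⟨w, hw, h⟩ := exists_992 hS h20
  rcases h with ⟨h0, _, h2⟩ | ⟨h0, h1, _⟩ | ⟨h0, h1, _⟩
  · obtain ⟨e, he, hc⟩ := exists_coord hw 1 0 (by decide)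
    refine ⟨_, he.eqv_map S, ?_, ?_⟩
    · have := nn_eq_lay (S := S) hc (by decide) 0
      have e1 : (1 : ZMod 3) * (0 - 0) = 0 := by decide
      rw [e1, h0] at this
      exact this.le
    · have := nn_eq_lay (S := S) hc (by decide) 2
      have e1 : (1 : ZMod 3) * (2 - 0) = 2 := by decide
      rw [e1, h2] at this
      exact this.symm
  · obtain ⟨e, he, hc⟩ := exists_coord hw 2 0 (by decide)
    refine ⟨_, he.eqv_map S, ?_, ?_⟩
    · have := nn_eq_lay (S := S) hc (by decide) 0
      have e1 : (2 : ZMod 3) * (0 - 0) = 0 := by decide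
      rw [e1, h0] at this
      exact this.le
    · have := nn_eq_lay (S := S) hc (by decide) 1
      have e1 : (2 : ZMod 3) * (1 - 0) = 2 := by decide
      rw [e1, h1] at this
      exact this.symm
  · obtain ⟨e, he, hc⟩ := exists_coord hw 1 1 (by decide)
    refine ⟨_, he.eqv_map S, ?_, ?_⟩
    · have := nn_eq_lay (S := S) hc (by decide) 1
      have e1 : (1 : ZMod 3) * (1 - 1) = 0 := by decide
      rw [e1, h1] at this
      exact this.le
    · have := nn_eq_lay (S := S) hc (by decide) 0
      have e1 : (1 : ZMod 3) * (0 - 1) = 2 := by decide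
      rw [e1, h0] at this
      exact this.symm

theorem card_codes (S : Finset V) : S.card = ((Finset.range 81).filter fun n => pt n ∈ S).card := by
  rw [← card_filter_code fun n => pt n ∈ S]
  congr 1
  ext x
  simp [pt_code]

theorem pre20_sound {S : Finset V} (h20 : S.card = 20) {ch cand : ℕ} (hp : pre20 ch cand = true) :
    ¬ Inv (fun n => n < 81 ∧ pt n ∈ S) ch cand := by
  intro hi
  rw [pre20, Nat.ble_eq, pop_eq] at hp
  have hsub : ((Finset.range 81).filter fun n => pt n ∈ S) ⊆
      (Finset.range 81).filter fun n => (Nat.lor ch cand).testBit n = true := by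
    intro n hn
    simp only [Finset.mem_filter, Finset.mem_range] at hn ⊢
    refine ⟨hn.1, ?_⟩
    have e : Nat.lor ch cand = ch ||| cand := rfl
    rw [e, Nat.testBit_or, Bool.or_eq_true]
    exact hi.2 n hn
  have := Finset.card_le_card hsub
  rw [← card_codes] at this
  omega

theorem code_ge54 {x : V} : 54 ≤ code x ↔ x 3 = 2 := by
  have h0 := ZMod.val_lt (x 0)
  have h1 := ZMod.val_lt (x 1)
  have h2 := ZMod.val_lt (x 2)
  have h3 := ZMod.val_lt (x 3)
  have : x 3 = 2 ↔ (x 3).val = 2 := by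
    generalize x 3 = a
    revert a; decide
  rw [this]
  unfold code; omega

theorem classify_layers {S : Finset V} (hS : IsCap S) (h20 : S.card = 20)
    (h0 : ∀ x : V, x 3 = 0 → (x ∈ S ↔ capA.testBit (code x) = true)) (h54 : pt 54 ∈ S)
    (h2 : (lay S 2).card = 2) : Eqv S (toSet capS) := by
  obtain ⟨c, hc, hlay⟩ : ∃ c : ℕ, (54 < c ∧ c < 81) ∧ lay S 2 = {pt 54, pt c} := by
    have hm : pt 54 ∈ lay S 2 := mem_lay.2 ⟨h54, by decide⟩
    obtain ⟨a, b, hab, hl⟩ := Finset.card_eq_two.1 h2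
    have key : ∀ y ∈ lay S 2, y ≠ pt 54 → 54 < code y ∧ code y < 81 := by
      intro y hy hne
      refine ⟨lt_of_le_of_ne (code_ge54.2 (mem_lay.1 hy).2) ?_, code_lt y⟩
      intro h
      apply hne
      rw [h, pt_code]
    have ha : a ∈ lay S 2 := by rw [hl]; simp
    have hb : b ∈ lay S 2 := by rw [hl]; simp
    rw [hl] at hm
    rcases Finset.mem_insert.1 hm with h | h
    · subst h
      exact ⟨code b, key b hb hab.symm, by rw [hl, pt_code]⟩
    · have h := Finset.mem_singleton.1 h
      subst h
      exact ⟨code a, key a ha hab, by rw [hl, pt_code, Finset.pair_comm]⟩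
  have hcS : pt c ∈ S := by
    have : pt c ∈ lay S 2 := by rw [hlay]; simp
    exact (mem_lay.1 this).1
  have hor : ∀ c, c < 81 → 54 < c → capA + 2 ^ 54 + 2 ^ c = (capA ||| 2 ^ 54) ||| 2 ^ c := by
    decide +kernel
  have hlt : capA < 2 ^ 27 := by decide
  have hbit : ∀ n, (capA + 2 ^ 54 + 2 ^ c).testBit n = true ↔
      capA.testBit n = true ∨ n = 54 ∨ n = c := by
    intro n
    rw [hor c hc.2 hc.1, Nat.testBit_or, Nat.testBit_or, Nat.testBit_two_pow, Nat.testBit_two_pow]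
    rw [Bool.or_eq_true, Bool.or_eq_true, decide_eq_true_eq, decide_eq_true_eq, or_assoc,
      eq_comm (a := 54), eq_comm (a := c)]
  let T : ℕ → Prop := fun n => n < 81 ∧ pt n ∈ S
  have hch : ∀ n, (capA + 2 ^ 54 + 2 ^ c).testBit n = true → T n := by
    intro n hn
    rw [hbit] at hn
    rcases hn with h | rfl | rfl
    · have h27 : n < 27 := lt_of_testBit hlt h
      refine ⟨by omega, ?_⟩
      have hcn : code (pt n) = n := code_pt (by omega)
      rw [h0 _ (code_lt27.1 (by rw [hcn]; exact h27)), hcn]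
      exact h
    · exact ⟨by norm_num, h54⟩
    · exact ⟨hc.2, hcS⟩
  have hrun : run pre20 bm1 refl leafB 30 [] (capA + 2 ^ 54 + 2 ^ c)
      (clean [54, c] (capA + 2 ^ 54 + 2 ^ c) mk31) = true := by
    have := List.all_eq_true.1 runB c (List.mem_range.2 hc.2)
    have hb : Nat.ble c 54 = false := by
      rw [← Bool.not_eq_true, Nat.ble_eq]; omega
    rw [hb, force_eq] at this
    exact this
  obtain ⟨m, hm, hT⟩ := run_sound (T := T) (fun ch cand hp => pre20_sound h20 hp)
    (by
      intro p n _ h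
      rw [bm1_testBit h])
    (by
      intro p ch _ hp hch n hn h
      exact refl_sound hS hp.1 hn.1 hp.2 (fun n hn => (hch n hn).2) hn.2 h)
    30 [] _ _ (by simp)
    (by
      refine ⟨hch, fun n hn => ?_⟩
      by_cases hb : (capA + 2 ^ 54 + 2 ^ c).testBit n = true
      · exact Or.inl hb
      right
      refine clean_sound hS hn.1 (fun n hn => (hch n hn).2) hn.2 hb _ ?_ _ ?_
      · have hcn : code (pt n) = n := code_pt hn.1
        rw [hbit] at hb
        push Not at hb
        have g1 : 27 ≤ n := by
          by_contra hlt
          have := (h0 (pt n) (code_lt27.1 (by omega))).1 hn.2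
          rw [hcn] at this
          exact hb.1 this
        have g2 : n < 54 := by
          by_contra hge
          have : pt n ∈ lay S 2 := mem_lay.2 ⟨hn.2, code_ge54.1 (by omega)⟩
          rw [hlay, Finset.mem_insert, Finset.mem_singleton] at this
          rcases this with h | h
          · exact hb.2.1 (pt_inj hn.1 (by norm_num) h)
          · exact hb.2.2 (pt_inj hn.1 hc.2 h)
        have key : ∀ n, n < 54 → 27 ≤ n → mk31.testBit n = true := by decide +kernel
        exact key n g2 g1
      · intro p hp
        simp only [List.mem_cons, List.not_mem_nil, or_false] at hp
        rcases hp with rfl | rfl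
        · exact ⟨by norm_num, h54⟩
        · exact ⟨hc.2, hcS⟩) hrun
  have hSm : S = toSet m := by
    ext x
    rw [mem_toSet, ← hT]
    simp only [T, pt_code, code_lt x, true_and]
  rw [hSm]
  rw [leafB, Bool.or_eq_true, Nat.beq_eq, Nat.beq_eq] at hm
  rcases hm with rfl | rfl
  · exact eqv_of_mapsTo (t := aff63) (by decide +kernel) (by decide +kernel)
  · exact eqv_of_mapsTo (t := aff72) (by decide +kernel) (by decide +kernel)

/-- Every cap with twenty points is equivalent to the standard one. -/
theorem classify {S : Finset V} (hS : IsCap S) (h20 : S.card = 20) : Eqv S (toSet capS) := by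
  obtain ⟨S1, h1, k0, k2⟩ := exists_layers hS h20
  have c1 := h1.isCap hS
  obtain ⟨S2, h2, hA⟩ := layer_std c1 k0
  have c2 := h2.eqv.isCap c1
  rw [h2.card] at k2
  obtain ⟨p, hp⟩ : (lay S2 2).Nonempty := Finset.card_pos.1 (by omega)
  rw [mem_lay] at hp
  have ht3 : (p - pt 54) 3 = 0 := by
    rw [Pi.sub_apply, hp.2]; decide
  obtain ⟨e, he, hf⟩ := good_of_linear (fun x => x + (x 3) • (p - pt 54)) (by
    intro x y
    simp only [Pi.add_apply, add_smul]; abel) (by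
    intro x hx
    have h3 := congrFun hx 3
    simp only [Pi.add_apply, Pi.smul_apply, ht3, smul_zero, add_zero, Pi.zero_apply] at h3
    simpa [h3] using hx)
  have hf3 : ∀ x, e x 3 = x 3 := by
    intro x
    rw [hf]
    simp only [Pi.add_apply, Pi.smul_apply, ht3, smul_zero, add_zero]
  have h3 := lay_map he hf3 S2
  have hfin : Eqv (S2.map e.toEmbedding) (toSet capS) := by
    apply classify_layers (h3.eqv.isCap c2)
    · rw [← h3.eqv.card, ← h2.eqv.card, ← h1.card, h20]
    · intro x hx
      have hx' : e x = x := by rw [hf, hx]; simp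
      rw [← hA x hx]
      conv_lhs => rw [← hx']
      exact (mem_map_equiv e S2 x).symm
    · have := (mem_map_equiv e S2 p).1 hp.1
      have hep : e p = pt 54 := by
        rw [hf, hp.2]
        have h2 : (2 : ZMod 3) = -1 := by decide
        rw [h2, neg_smul, one_smul]; abel
      rwa [hep] at this
    · rw [← h3.card]; exact k2
  exact h1.trans (h2.eqv.trans (h3.eqv.trans hfin))

/-- Checks that a mask describes a cap. -/
noncomputable def capOk (m : ℕ) : Bool :=
  Nat.beq (pop 81 m) 20 &&
  (List.range 81).all fun p => cond (m.testBit p) (Nat.beq (Nat.land (refl p m) m) (Nat.pow 2 p)) true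

theorem isCap_of_capOk {m : ℕ} (h : capOk m = true) : IsCap (toSet m) ∧ (toSet m).card = 20 := by
  rw [capOk, Bool.and_eq_true, Nat.beq_eq] at h
  refine ⟨?_, by rw [card_toSet]; exact h.1⟩
  intro x hx y hy z hz hxy hxz hyz hs
  rw [mem_toSet] at hx hy hz
  have h1 := List.all_eq_true.1 h.2 (code x) (List.mem_range.2 (code_lt x))
  rw [hx, cond_true, Nat.beq_eq] at h1
  have hz' : third (code x) (code y) = code z := by
    apply pt_inj (third_lt _ _) (code_lt z)
    have := pt_add_third (code x) (code y)
    rw [pt_code, pt_code] at this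
    rw [pt_code]
    exact add_left_cancel (this.trans hs.symm)
  have h2 : (refl (code x) m &&& m).testBit (code y) = true := by
    rw [Nat.testBit_and, refl_testBit _ _ _ (code_lt y), hz', hz, hy]; rfl
  have h3 : refl (code x) m &&& m = 2 ^ code x := h1
  rw [h3, Nat.testBit_two_pow] at h2
  exact hxy (code_inj (of_decide_eq_true h2))

theorem capS_ok : capOk capS = true := by decide +kernel

theorem isCap_capS : IsCap (toSet capS) := (isCap_of_capOk capS_ok).1

theorem card_capS : (toSet capS).card = 20 := (isCap_of_capOk capS_ok).2

theorem capS_complete : (List.range 81).all (fun p => capS.testBit p ||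
    !(Nat.beq (Nat.land (refl p capS) capS) 0)) = true := by decide +kernel

/-- No cap has more than twenty points. -/
theorem card_le_twenty {D : Finset V} (hD : IsCap D) : D.card ≤ 20 := by
  by_contra hcon
  obtain ⟨E, hE, hE20⟩ := Finset.exists_subset_card_eq (show 20 ≤ D.card by omega)
  have hEc : IsCap E := fun x hx y hy z hz => hD x (hE hx) y (hE hy) z (hE hz)
  obtain ⟨e, he, h⟩ := classify hEc hE20
  obtain ⟨q, hq, hqE⟩ : ∃ q ∈ D, q ∉ E := by
    by_contra hcon'
    push Not at hcon'
    have := Finset.card_le_card (show D ⊆ E from hcon')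
    omega
  have h1 := List.all_eq_true.1 capS_complete (code (e q)) (List.mem_range.2 (code_lt _))
  have h2 : capS.testBit (code (e q)) = false := by
    rw [← Bool.not_eq_true, ← mem_toSet, ← h]; exact hqE
  rw [h2, Bool.false_or, Bool.not_eq_true', ← Bool.not_eq_true, Nat.beq_eq] at h1
  obtain ⟨n, hn⟩ := Nat.exists_testBit_of_ne_zero h1
  have hn' : (refl (code (e q)) capS &&& capS).testBit n = true := hn
  rw [Nat.testBit_and, Bool.and_eq_true] at hn'
  have hn81 : n < 81 := lt_of_testBit (show capS < 2 ^ 81 by decide) hn'.2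
  rw [refl_testBit _ _ _ hn81] at hn'
  have hmem : ∀ k < 81, capS.testBit k = true → e.symm (pt k) ∈ E := by
    intro k hk hb
    rw [h, Equiv.apply_symm_apply, mem_toSet, code_pt hk]; exact hb
  have m1 := hmem n hn81 hn'.2
  have m2 := hmem _ (third_lt _ _) hn'.1
  have hs := pt_add_third (code (e q)) n
  rw [pt_code] at hs
  have hs' := (he.symm _ _ _).1 hs
  rw [Equiv.symm_apply_apply] at hs'
  have := cap_eq_of_sum hD hq (hE m1) (hE m2) hs'
  rw [this.1] at hqE
  exact hqE m1

theorem maximalCap_iff {D : Finset V} : MaximalCap D ↔ IsCap D ∧ D.card = 20 := by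
  constructor
  · rintro ⟨h1, h2⟩
    refine ⟨h1, le_antisymm (card_le_twenty h1) ?_⟩
    rw [← card_capS]; exact h2 _ isCap_capS
  · rintro ⟨h1, h2⟩
    refine ⟨h1, fun E hE => ?_⟩
    rw [h2]; exact card_le_twenty hE

/-- The point `a` is a center of symmetry of `T`. -/
def Center (T : Finset V) (a : V) : Prop := a ∉ T ∧ ∀ x y, a + x + y = 0 → x ∈ T → y ∈ T

theorem Center.map {T T' : Finset V} {a : V} {e : V ≃ V} (he : Good e) (h : ∀ x, x ∈ T ↔ e x ∈ T')
    (hc : Center T a) : Center T' (e a) := by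
  refine ⟨by rw [← h]; exact hc.1, ?_⟩
  intro x y hs hx
  obtain ⟨x, rfl⟩ := e.surjective x
  obtain ⟨y, rfl⟩ := e.surjective y
  rw [← h] at hx ⊢
  exact hc.2 x y ((he a x y).2 hs) hx

theorem third_forty {n : ℕ} (hn : n < 81) : third 40 n = 80 - n := by
  have : ∀ n, n < 81 → third 40 n = 80 - n := by decide +kernel
  exact this n hn

theorem third_unique {n : ℕ} {x y : V} (h : pt n + x + y = 0) : third n (code x) = code y := by
  apply pt_inj (third_lt _ _) (code_lt y)
  have := pt_add_third n (code x)
  rw [pt_code] at this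
  rw [pt_code]
  exact add_left_cancel (this.trans h.symm)

theorem center_capS : Center (toSet capS) (pt 40) := by
  have h1 : ∀ n, n < 81 → capS.testBit n = capS.testBit (80 - n) := by decide +kernel
  refine ⟨?_, ?_⟩
  · rw [mem_toSet, code_pt (by norm_num)]; decide +kernel
  · intro x y hs hx
    rw [mem_toSet] at hx ⊢
    rw [← third_unique hs, third_forty (code_lt x), ← h1 _ (code_lt x)]
    exact hx

theorem exists_center {T : Finset V} (hT : IsCap T) (h20 : T.card = 20) : ∃ a, Center T a := by
  obtain ⟨e, he, h⟩ := (classify hT h20).symm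
  exact ⟨_, center_capS.map he h⟩

/-- The bilinear form in coordinates. -/
def dotc (d n : ℕ) : ℕ :=
  (d % 3 * (n % 3) + d / 3 % 3 * (n / 3 % 3) + d / 9 % 3 * (n / 9 % 3)
    + d / 27 % 3 * (n / 27 % 3)) % 3

theorem dot_pt (d n : ℕ) : dot (pt d) (pt n) = ((dotc d n : ℕ) : ZMod 3) := by
  rw [dotc, ZMod.natCast_mod]
  simp only [Nat.cast_add, Nat.cast_mul, ZMod.natCast_mod]
  rw [dot, Fin.sum_univ_four]
  simp only [pt_zero', pt_one', pt_two', pt_three']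

theorem planes_ok : ((dirList.zip planeList).all fun e => Nat.ble 1 e.1 && Nat.ble e.1 80 &&
    ((List.range 40).all fun n => !(Nat.beq (dotc e.1 n) (dotc e.1 40)) || e.2.testBit n)) = true := by
  decide +kernel

theorem planes_zip : (dirList.zip planeList).map Prod.snd = planeList := by decide +kernel

theorem hits_hyperplane {T : Finset V} (hT : IsCap T) (h20 : T.card = 20) {w : V} (hw : w ≠ 0)
    (c : ZMod 3) : ∃ x ∈ T, dot w x = c := by
  have h0 := nn_le hT hw 0
  have h1 := nn_le hT hw 1
  have h2 := nn_le hT hw 2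
  have hs := nn_sum T w
  have hpos : 0 < nn T w c := by
    have : c = 0 ∨ c = 1 ∨ c = 2 := by revert c; decide
    rcases this with rfl | rfl | rfl <;> omega
  obtain ⟨x, hx⟩ := Finset.card_pos.1 hpos
  exact ⟨x, (Finset.mem_filter.1 hx).1, (Finset.mem_filter.1 hx).2⟩

theorem hits_planes {T : Finset V} (hT : IsCap T) (h20 : T.card = 20) (hc : Center T (pt 40)) :
    ∀ h ∈ planeList, ∃ n, (n < 81 ∧ pt n ∈ T) ∧ h.testBit n = true := by
  intro h hh
  rw [← planes_zip] at hh
  obtain ⟨⟨d, h'⟩, hd, rfl⟩ := List.mem_map.1 hh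
  have hok := List.all_eq_true.1 planes_ok _ hd
  simp only [Bool.and_eq_true, Nat.ble_eq, List.all_eq_true, List.mem_range, Bool.or_eq_true,
    Bool.not_eq_true', ← Bool.not_eq_true, Nat.beq_eq] at hok
  obtain ⟨⟨hd1, hd2⟩, hok⟩ := hok
  have hw : pt d ≠ 0 := by
    intro h0
    have := pt_inj (n := d) (m := 0) (by omega) (by norm_num) (h0.trans pt_single.1.symm)
    omega
  have key : ∀ x ∈ T, dot (pt d) x = dot (pt d) (pt 40) → code x < 40 →
      ∃ n, (n < 81 ∧ pt n ∈ T) ∧ h'.testBit n = true := by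
    intro x hx hdx hlt
    refine ⟨code x, ⟨code_lt x, by rw [pt_code]; exact hx⟩, ?_⟩
    rcases hok (code x) hlt with h | h
    · exfalso
      apply h
      rw [← pt_code x, dot_pt, dot_pt, ZMod.natCast_eq_natCast_iff'] at hdx
      have l1 : dotc d (code x) < 3 := Nat.mod_lt _ (by norm_num)
      have l2 : dotc d 40 < 3 := Nat.mod_lt _ (by norm_num)
      rwa [Nat.mod_eq_of_lt l1, Nat.mod_eq_of_lt l2] at hdx
    · exact h
  obtain ⟨x, hx, hdx⟩ := hits_hyperplane hT h20 hw (dot (pt d) (pt 40))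
  have hne : code x ≠ 40 := by
    intro h
    apply hc.1
    rw [← h, pt_code]; exact hx
  rcases Nat.lt_or_gt_of_ne hne with hlt | hgt
  · exact key x hx hdx hlt
  · have hs : pt 40 + x + (-(pt 40 + x)) = 0 := by abel
    refine key _ (hc.2 _ _ hs hx) ?_ ?_
    · have h1 : dot (pt d) (pt 40) + dot (pt d) x + dot (pt d) (-(pt 40 + x)) = 0 := by
        rw [← dot_add, ← dot_add, hs, dot_zero_right]
      rw [hdx] at h1
      have k : ∀ a b : ZMod 3, a + a + b = 0 → b = a := by decide
      exact k _ _ h1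
    · rw [← third_unique hs, third_forty (code_lt x)]
      omega

theorem bm2_testBit {p n : ℕ} (h : (bm2 p).testBit n = true) : n = p ∨ n = 80 - p := by
  have h' : (2 ^ p ||| 2 ^ (80 - p)).testBit n = true := h
  rw [Nat.testBit_or, Nat.testBit_two_pow, Nat.testBit_two_pow, Bool.or_eq_true, decide_eq_true_eq,
    decide_eq_true_eq] at h'
  rcases h' with h | h
  · exact Or.inl h.symm
  · exact Or.inr h.symm

theorem sym_run {T : Finset V} (hT : IsCap T) (h20 : T.card = 20) (hc : Center T (pt 40))
    {M cand : ℕ} {leaf : ℕ → Bool} (hd : Disjoint (toSet M) T)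
    (hcand : ((List.range 81).all fun n => Nat.beq n 40 || M.testBit n || M.testBit (80 - n) ||
      cand.testBit n) = true)
    (hrun : run preNone bm2 cl2 leaf 45 planeList 0 cand = true) :
    ∃ m, leaf m = true ∧ T = toSet m ∧ pop 81 m = 20 := by
  have hsym : ∀ p, p ≤ 80 → pt p ∈ T → pt (80 - p) ∈ T := by
    intro p hp h
    have := pt_add_third 40 p
    rw [third_forty (by omega)] at this
    exact hc.2 _ _ this h
  have hnM : ∀ n, n < 81 → pt n ∈ T → M.testBit n = false := by
    intro n hn h
    rw [← Bool.not_eq_true]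
    intro hb
    refine Finset.disjoint_left.1 hd ?_ h
    rw [mem_toSet, code_pt hn]; exact hb
  obtain ⟨m, hm, hTm⟩ := run_sound (T := fun n => n < 81 ∧ pt n ∈ T) (pre := preNone)
    (by intro ch cand h; simp [preNone] at h)
    (by
      intro p n hp h
      rcases bm2_testBit h with rfl | rfl
      · exact Iff.rfl
      · constructor
        · rintro ⟨_, h2⟩
          refine ⟨by omega, ?_⟩
          have := hsym _ (by omega) h2
          rwa [Nat.sub_sub_self hp] at this
        · rintro ⟨_, h2⟩
          exact ⟨by omega, hsym _ hp h2⟩)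
    (by
      intro p ch hp hpT hch n hn h
      have h' : (refl p ch ||| refl (80 - p) ch).testBit n = true := h
      rw [Nat.testBit_or, Bool.or_eq_true] at h'
      rcases h' with h | h
      · exact refl_sound hT hpT.1 hn.1 hpT.2 (fun n hn => (hch n hn).2) hn.2 h
      · exact refl_sound hT (by omega) hn.1 (hsym p hp hpT.2) (fun n hn => (hch n hn).2) hn.2 h)
    45 planeList 0 cand (hits_planes hT h20 hc)
    (by
      refine ⟨fun n hn => by simp at hn, fun n hn => Or.inr ?_⟩
      have h1 := List.all_eq_true.1 hcand n (List.mem_range.2 hn.1)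
      have h2 := hnM n hn.1 hn.2
      have h3 := hnM (80 - n) (by omega) (hsym n (by have := hn.1; omega) hn.2)
      have h4 : Nat.beq n 40 = false := by
        rw [← Bool.not_eq_true, Nat.beq_eq]
        rintro rfl
        exact hc.1 hn.2
      rwa [h2, h3, h4] at h1) hrun
  have hset : T = toSet m := by
    ext x
    rw [mem_toSet, ← hTm]
    simp only [pt_code, code_lt x, true_and]
  refine ⟨m, hm, hset, ?_⟩
  rw [← card_toSet, ← hset, h20]

def centerOk (n : ℕ) (e : ℕ × List ℕ) : Bool :=
  Nat.beq n 40 || ((Nat.beq e.1 1 || Nat.beq e.1 2) && affOk e.2 && Nat.beq (affc e.2 n) 40 &&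
    mapsTo e.2 capS (cond (Nat.beq e.1 1) capP capQ))

theorem centers_ok : ((List.range 81).all fun n => centerOk n (centerTable.getD n (0, []))) = true := by
  decide +kernel

theorem candS_ok : ((List.range 81).all fun n => Nat.beq n 40 || capS.testBit n ||
    capS.testBit (80 - n) || candS.testBit n) = true := by decide +kernel

theorem candP_ok : ((List.range 81).all fun n => Nat.beq n 40 || capP.testBit n ||
    capP.testBit (80 - n) || candP.testBit n) = true := by decide +kernel

theorem candQ_ok : ((List.range 81).all fun n => Nat.beq n 40 || capQ.testBit n ||
    capQ.testBit (80 - n) || candQ.testBit n) = true := by decide +kernel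

/-- The caps of size twenty disjoint from the standard one are those in the list. -/
theorem disjoint_caps {T : Finset V} (hT : IsCap T) (h20 : T.card = 20)
    (hd : Disjoint (toSet capS) T) : ∃ m ∈ capList, T = toSet m := by
  obtain ⟨a, ha⟩ := exists_center hT h20
  have hok := List.all_eq_true.1 centers_ok (code a) (List.mem_range.2 (code_lt a))
  rw [centerOk, Bool.or_eq_true] at hok
  rcases hok with h | h
  · rw [Nat.beq_eq] at h
    have ha' : a = pt 40 := by rw [← h, pt_code]
    subst ha'
    obtain ⟨m, hm, hset, hp⟩ := sym_run hT h20 ha hd candS_ok runS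
    refine ⟨m, ?_, hset⟩
    rw [leafS, hp, show Nat.beq 20 20 = true from rfl, cond_true, List.any_eq_true] at hm
    obtain ⟨m', h1, h2⟩ := hm
    rw [Nat.beq_eq] at h2
    rwa [h2] at h1
  · exfalso
    simp only [Bool.and_eq_true] at h
    obtain ⟨⟨⟨hk, h1⟩, h2⟩, h3⟩ := h
    generalize centerTable.getD (code a) (0, []) = r at *
    obtain ⟨k, t⟩ := r
    simp only at hk h1 h2 h3
    obtain ⟨e, he, hc⟩ := exists_aff h1
    have hea : e a = pt 40 := by
      rw [Nat.beq_eq] at h2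
      rw [← h2, ← hc, pt_code]
    have hE := he.eqv_map T
    have hcen := ha.map he (mem_map_equiv e T)
    rw [hea] at hcen
    have hdis : ∀ M, mapsTo t capS M = true → Disjoint (toSet M) (T.map e.toEmbedding) := by
      intro M hM
      rw [Finset.disjoint_left]
      intro x hx hx'
      obtain ⟨y, rfl⟩ := e.surjective x
      rw [← mem_map_equiv] at hx'
      rw [mem_toSet, hc, ← mapsTo_apply hM (code_lt y), ← mem_toSet] at hx
      exact Finset.disjoint_left.1 hd hx hx'
    have hno : ∀ m, leafN m = true → pop 81 m = 20 → False := by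
      intro m h hp
      rw [leafN, hp, show Nat.beq 20 20 = true from rfl] at h
      simp at h
    have c20 : (T.map e.toEmbedding).card = 20 := by rw [← hE.card]; exact h20
    cases hk1 : Nat.beq k 1 with
    | true =>
      rw [hk1] at h3
      obtain ⟨m, hm, _, hp⟩ := sym_run (hE.isCap hT) c20 hcen (hdis _ h3) candP_ok runP
      exact hno m hm hp
    | false =>
      rw [hk1] at h3
      obtain ⟨m, hm, _, hp⟩ := sym_run (hE.isCap hT) c20 hcen (hdis _ h3) candQ_ok runQ
      exact hno m hm hp

/-- The mask of the points outside the standard cap and different from its center. -/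
def full : ℕ := 2 ^ 81 - 1 - 2 ^ 40 - capS

theorem full_testBit {n : ℕ} (hn : n < 81) :
    full.testBit n = (!(decide (n = 40)) && !capS.testBit n) := by
  have : ∀ n, n < 81 → full.testBit n = (!(decide (n = 40)) && !capS.testBit n) := by decide +kernel
  exact this n hn

/-- The remaining mask. -/
def rest (a b : ℕ) : ℕ := Nat.xor full (Nat.lor a b)

noncomputable def inList (c : ℕ) : Bool := force c fun c => capList.any fun m => Nat.beq c m

theorem inList_iff (c : ℕ) : inList c = true ↔ c ∈ capList := by
  rw [inList, force_eq, List.any_eq_true]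
  constructor
  · rintro ⟨m, hm, h⟩
    rw [Nat.beq_eq] at h
    rwa [h]
  · intro h
    exact ⟨c, h, by rw [Nat.beq_eq]⟩

/-- Do the masks `a`, `b` give a partition? -/
noncomputable def pairOk (a b : ℕ) : Bool :=
  bsel (Nat.beq (Nat.land a b) 0) (inList (rest a b)) false

/-- The same, with the masks in increasing order. -/
noncomputable def tripOk (a b : ℕ) : Bool :=
  bsel (Nat.ble (Nat.succ a) b) (bsel (pairOk a b) (Nat.ble (Nat.succ b) (rest a b)) false) false

theorem capList_ok : (capList.all fun m => capOk m && Nat.beq (Nat.land m full) m) = true := by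
  decide +kernel

theorem capList_partner : (capList.all fun m => capList.any fun b => pairOk m b) = true := by
  decide +kernel

theorem capList_count : (capList.map fun a => capList.countP (tripOk a)).sum = 216 := by
  decide +kernel

theorem capList_sorted : capList.Pairwise (· < ·) := by
  decide +kernel

theorem capList_nodup : capList.Nodup := capList_sorted.imp fun h => Nat.ne_of_lt h

theorem cond_false_iff (x y : Bool) : cond x y false = true ↔ x = true ∧ y = true := by
  cases x <;> simp

theorem pairOk_iff (a b : ℕ) : pairOk a b = true ↔ a &&& b = 0 ∧ rest a b ∈ capList := by
  have h : pairOk a b = bsel (Nat.beq (Nat.land a b) 0) (inList (rest a b)) false := by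
    rw [pairOk]
  rw [h, bsel_eq, cond_false_iff, inList_iff, Nat.beq_eq]
  exact Iff.rfl

theorem tripOk_iff (a b : ℕ) : tripOk a b = true ↔
    a < b ∧ b < rest a b ∧ a &&& b = 0 ∧ rest a b ∈ capList := by
  have h1 : ∀ x y, Nat.ble (Nat.succ x) y = true ↔ x < y := fun x y => by
    rw [Nat.ble_eq]; exact Iff.rfl
  rw [tripOk, bsel_eq, bsel_eq, cond_false_iff, cond_false_iff, h1, h1, pairOk_iff]
  tauto

theorem mem_capList {m : ℕ} (h : m ∈ capList) : MaximalCap (toSet m) ∧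
    ∀ n, m.testBit n = true → n < 81 ∧ full.testBit n = true := by
  have h1 := List.all_eq_true.1 capList_ok m h
  rw [Bool.and_eq_true, Nat.beq_eq] at h1
  refine ⟨maximalCap_iff.2 (isCap_of_capOk h1.1), fun n hn => ?_⟩
  have h2 : m &&& full = m := h1.2
  have h3 : full.testBit n = true := by
    rw [← h2, Nat.testBit_and, Bool.and_eq_true] at hn
    exact hn.2
  exact ⟨lt_of_testBit (show full < 2 ^ 81 by decide) h3, h3⟩

theorem maximalCap_capS : MaximalCap (toSet capS) := maximalCap_iff.2 ⟨isCap_capS, card_capS⟩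

theorem toSet_inj {m k : ℕ} (hm : ∀ n, m.testBit n = true → n < 81)
    (hk : ∀ n, k.testBit n = true → n < 81) (h : toSet m = toSet k) : m = k := by
  apply Nat.eq_of_testBit_eq
  intro n
  rw [Bool.eq_iff_iff]
  have key : ∀ n, n < 81 → (m.testBit n = true ↔ k.testBit n = true) := by
    intro n hn
    have : pt n ∈ toSet m ↔ pt n ∈ toSet k := by rw [h]
    rwa [mem_toSet, mem_toSet, code_pt hn] at this
  exact ⟨fun h => (key n (hm n h)).1 h, fun h => (key n (hk n h)).2 h⟩

theorem and_eq_zero_iff {a b : ℕ} :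
    a &&& b = 0 ↔ ∀ n, a.testBit n = true → b.testBit n = true → False := by
  constructor
  · intro h n h1 h2
    have : (a &&& b).testBit n = true := by rw [Nat.testBit_and, h1, h2]; rfl
    rw [h] at this
    simp at this
  · intro h
    apply Nat.eq_of_testBit_eq
    intro n
    rw [Nat.testBit_and, Nat.zero_testBit, ← Bool.not_eq_true, Bool.and_eq_true]
    exact fun hn => h n hn.1 hn.2

theorem rest_testBit (a b n : ℕ) :
    (rest a b).testBit n = (full.testBit n ^^ (a.testBit n || b.testBit n)) := by
  have e : rest a b = full ^^^ (a ||| b) := rfl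
  rw [e, Nat.testBit_xor, Nat.testBit_or]

/-- The partition given by two masks. -/
noncomputable def part (a b : ℕ) : Finset (Finset V) :=
  {toSet capS, toSet a, toSet b, toSet (rest a b)}

theorem maximalCap_nonempty {C : Finset V} (h : MaximalCap C) : C.Nonempty := by
  have := (maximalCap_iff.1 h).2
  exact Finset.card_pos.1 (by omega)

theorem part_ok {a b : ℕ} (ha : a ∈ capList) (hb : b ∈ capList) (hab : a &&& b = 0)
    (hc : rest a b ∈ capList) : IsCapPartition (part a b) := by
  obtain ⟨ma, fa⟩ := mem_capList ha
  obtain ⟨mb, fb⟩ := mem_capList hb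
  obtain ⟨mc, fc⟩ := mem_capList hc
  have hr := rest_testBit a b
  rw [and_eq_zero_iff] at hab
  have dS : ∀ m, (∀ n, m.testBit n = true → n < 81 ∧ full.testBit n = true) →
      Disjoint (toSet capS) (toSet m) := by
    intro m fm
    rw [Finset.disjoint_left]
    intro x h1 h2
    rw [mem_toSet] at h1 h2
    have := (fm _ h2).2
    rw [full_testBit (code_lt x), h1] at this
    simp at this
  have dSa := dS a fa
  have dSb := dS b fb
  have dSc := dS _ fc
  have dab : Disjoint (toSet a) (toSet b) := by
    rw [Finset.disjoint_left]
    intro x h1 h2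
    rw [mem_toSet] at h1 h2
    exact hab _ h1 h2
  have dac : Disjoint (toSet a) (toSet (rest a b)) := by
    rw [Finset.disjoint_left]
    intro x h1 h2
    rw [mem_toSet] at h1 h2
    rw [hr, h1, (fa _ h1).2] at h2
    simp at h2
  have dbc : Disjoint (toSet b) (toSet (rest a b)) := by
    rw [Finset.disjoint_left]
    intro x h1 h2
    rw [mem_toSet] at h1 h2
    rw [hr, h1, (fb _ h1).2] at h2
    simp at h2
  have ne : ∀ C D : Finset V, MaximalCap C → Disjoint C D → C ≠ D := by
    rintro C D hC hd rfl
    have := maximalCap_nonempty hC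
    rw [disjoint_self] at hd
    rw [hd] at this
    simp at this
  have hSm := maximalCap_capS
  refine ⟨?_, ?_, ?_, pt 40, ?_⟩
  · rw [part, Finset.card_insert_of_notMem, Finset.card_insert_of_notMem, Finset.card_pair]
    · exact ne _ _ mb dbc
    · simp only [Finset.mem_insert, Finset.mem_singleton, not_or]
      exact ⟨ne _ _ ma dab, ne _ _ ma dac⟩
    · simp only [Finset.mem_insert, Finset.mem_singleton, not_or]
      exact ⟨ne _ _ hSm dSa, ne _ _ hSm dSb, ne _ _ hSm dSc⟩
  · intro C hC
    simp only [part, Finset.mem_insert, Finset.mem_singleton] at hC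
    rcases hC with rfl | rfl | rfl | rfl
    · exact hSm
    · exact ma
    · exact mb
    · exact mc
  · intro C hC D hD hne
    simp only [part, Finset.mem_insert, Finset.mem_singleton] at hC hD
    rcases hC with rfl | rfl | rfl | rfl <;> rcases hD with rfl | rfl | rfl | rfl <;>
      first
        | exact absurd rfl hne
        | assumption
        | (apply Disjoint.symm; assumption)
  · ext x
    have hx : x = pt 40 ↔ code x = 40 := by
      constructor
      · rintro rfl; exact code_pt (by norm_num)
      · intro h; rw [← h, pt_code]
    simp only [Finset.mem_sup, part, Finset.mem_insert, Finset.mem_singleton, id, exists_eq_or_imp,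
      exists_eq_left, mem_toSet, Finset.mem_sdiff, Finset.mem_univ, true_and, hx, hr]
    have hf := full_testBit (code_lt x)
    have fa' := fa (code x)
    have fb' := fb (code x)
    have h40 : capS.testBit 40 = false := by decide +kernel
    by_cases h : code x = 40
    · rw [h] at hf fa' fb' ⊢
      rw [h40] at hf
      have hf' : Nat.testBit full 40 = false := by rw [hf]; rfl
      rw [hf'] at fa' fb' ⊢
      have ga : a.testBit 40 = false := by
        rw [← Bool.not_eq_true]; intro h; simpa using (fa' h).2
      have gb : b.testBit 40 = false := by
        rw [← Bool.not_eq_true]; intro h; simpa using (fb' h).2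
      rw [h40, ga, gb]
      simp
    · simp only [h, decide_false, Bool.not_false, Bool.true_and] at hf
      rw [hf]
      cases capS.testBit (code x) <;> cases a.testBit (code x) <;> cases b.testBit (code x) <;>
        simp [h]

theorem sort3 (Q : ℕ → ℕ → ℕ → Prop) (h12 : ∀ a b c, Q a b c → Q b a c)
    (h23 : ∀ a b c, Q a b c → Q a c b) {a b c : ℕ} (hab : a ≠ b) (hac : a ≠ c) (hbc : b ≠ c)
    (h : Q a b c) : ∃ a' b' c', a' < b' ∧ b' < c' ∧ Q a' b' c' := by
  rcases Nat.lt_or_gt_of_ne hab with h1 | h1 <;> rcases Nat.lt_or_gt_of_ne hac with h2 | h2 <;>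
    rcases Nat.lt_or_gt_of_ne hbc with h3 | h3
  · exact ⟨a, b, c, h1, h3, h⟩
  · exact ⟨a, c, b, h2, h3, h23 _ _ _ h⟩
  · omega
  · exact ⟨c, a, b, h2, h1, h12 _ _ _ (h23 _ _ _ h)⟩
  · exact ⟨b, a, c, h1, h2, h12 _ _ _ h⟩
  · omega
  · exact ⟨b, c, a, h3, h2, h23 _ _ _ (h12 _ _ _ h)⟩
  · exact ⟨c, b, a, h3, h1, h12 _ _ _ (h23 _ _ _ (h12 _ _ _ h))⟩

theorem exists_part {P : Finset (Finset V)} (hP : IsCapPartition P) (hS : toSet capS ∈ P) :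
    ∃ a ∈ capList, ∃ b ∈ capList, tripOk a b = true ∧ part a b = P := by
  obtain ⟨h4, hmax, hdis, p, hp⟩ := hP
  have h3 : (P.erase (toSet capS)).card = 3 := by
    rw [Finset.card_erase_of_mem hS, h4]
  obtain ⟨A, B, C, hAB, hAC, hBC, hE⟩ := Finset.card_eq_three.1 h3
  have hP' : P = insert (toSet capS) {A, B, C} := by
    rw [← hE, Finset.insert_erase hS]
  have hmem : ∀ D ∈ P.erase (toSet capS), ∃ m ∈ capList, D = toSet m := by
    intro D hD
    rw [Finset.mem_erase] at hD
    have := maximalCap_iff.1 (hmax D hD.2)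
    exact disjoint_caps this.1 this.2 (hdis _ hS _ hD.2 hD.1.symm)
  obtain ⟨a, ha, rfl⟩ := hmem A (by rw [hE]; simp)
  obtain ⟨b, hb, rfl⟩ := hmem B (by rw [hE]; simp)
  obtain ⟨c, hc, rfl⟩ := hmem C (by rw [hE]; simp)
  obtain ⟨a, b, c, hab, hbc, ha, hb, hc, hP', nab, nac, nbc⟩ := sort3 (fun a b c => a ∈ capList ∧ b ∈ capList ∧
      c ∈ capList ∧ P = {toSet capS, toSet a, toSet b, toSet c} ∧ toSet a ≠ toSet b ∧
      toSet a ≠ toSet c ∧ toSet b ≠ toSet c)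
    (by
      rintro a b c ⟨h1, h2, h3, h4, h5, h6, h7⟩
      refine ⟨h2, h1, h3, ?_, h5.symm, h7, h6⟩
      rw [h4, Finset.insert_comm (toSet a)])
    (by
      rintro a b c ⟨h1, h2, h3, h4, h5, h6, h7⟩
      refine ⟨h1, h3, h2, ?_, h6, h5, h7.symm⟩
      rw [h4, Finset.pair_comm])
    (fun h => hAB (by rw [h])) (fun h => hAC (by rw [h])) (fun h => hBC (by rw [h]))
    (show _ from ⟨ha, hb, hc, hP', hAB, hAC, hBC⟩)
  have fa := (mem_capList ha).2
  have fb := (mem_capList hb).2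
  have fc := (mem_capList hc).2
  have mA : toSet a ∈ P := by rw [hP']; simp
  have mB : toSet b ∈ P := by rw [hP']; simp
  have mC : toSet c ∈ P := by rw [hP']; simp
  have dj : ∀ k l, Disjoint (toSet k) (toSet l) → ∀ n, n < 81 → k.testBit n = true →
      l.testBit n = true → False := by
    intro k l hd n hn h1 h2
    have e := code_pt hn
    have k1 : pt n ∈ toSet k := by rw [mem_toSet, e]; exact h1
    have k2 : pt n ∈ toSet l := by rw [mem_toSet, e]; exact h2
    exact Finset.disjoint_left.1 hd k1 k2
  have dab := dj a b (hdis _ mA _ mB nab)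
  have dac := dj a c (hdis _ mA _ mC nac)
  have dbc := dj b c (hdis _ mB _ mC nbc)
  have hunion : ∀ x : V, x ≠ p ↔ capS.testBit (code x) = true ∨ a.testBit (code x) = true ∨
      b.testBit (code x) = true ∨ c.testBit (code x) = true := by
    intro x
    have : x ∈ P.sup id ↔ x ∈ Finset.univ \ {p} := by rw [hp]
    rw [hP'] at this
    simp only [Finset.mem_sup, Finset.mem_insert, Finset.mem_singleton, id, exists_eq_or_imp,
      exists_eq_left, mem_toSet, Finset.mem_sdiff, Finset.mem_univ, true_and] at this
    exact this.symm
  have h40 : capS.testBit 40 = false := by decide +kernel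
  have f40 : full.testBit 40 = false := by decide +kernel
  have hp40 : p = pt 40 := by
    by_contra hne
    have := (hunion (pt 40)).1 (Ne.symm hne)
    rw [code_pt (by norm_num), h40] at this
    rcases this with h | h | h | h
    · simp at h
    · have := (fa _ h).2; simp [f40] at this
    · have := (fb _ h).2; simp [f40] at this
    · have := (fc _ h).2; simp [f40] at this
  subst hp40
  have hrest : rest a b = c := by
    apply Nat.eq_of_testBit_eq
    intro n
    rw [rest_testBit]
    by_cases hn : n < 81
    · have hu := hunion (pt n)
      rw [code_pt hn] at hu
      have hne : pt n ≠ pt 40 ↔ n ≠ 40 := by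
        constructor
        · rintro h rfl; exact h rfl
        · intro h h'; exact h (pt_inj hn (by norm_num) h')
      rw [hne] at hu
      have d1 := dab n hn
      have d2 := dac n hn
      have d3 := dbc n hn
      have g1 := fa n
      have g2 := fb n
      have g3 := fc n
      have hf := full_testBit hn
      by_cases h : n = 40
      · subst h
        rw [f40] at g1 g2 g3 ⊢
        revert g1 g2 g3
        cases a.testBit 40 <;> cases b.testBit 40 <;> cases c.testBit 40 <;> simp
      · simp only [h, decide_false, Bool.not_false, Bool.true_and] at hf
        rw [hf] at g1 g2 g3 ⊢
        revert g1 g2 g3 d1 d2 d3 hu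
        cases capS.testBit n <;> cases a.testBit n <;> cases b.testBit n <;> cases c.testBit n <;>
          simp [h]
    · have hz : ∀ m : ℕ, (∀ n, m.testBit n = true → n < 81 ∧ full.testBit n = true) →
          m.testBit n = false := by
        intro m hm
        rw [← Bool.not_eq_true]
        exact fun h => hn (hm n h).1
      have hzf : full.testBit n = false := by
        rw [← Bool.not_eq_true]
        exact fun h => hn (lt_of_testBit (show full < 2 ^ 81 by decide) h)
      rw [hz a fa, hz b fb, hz c fc, hzf]; rfl
  refine ⟨a, ha, b, hb, ?_, ?_⟩
  · rw [tripOk_iff, hrest]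
    refine ⟨hab, hbc, ?_, hc⟩
    rw [and_eq_zero_iff]
    exact fun n h1 h2 => dab n (fa n h1).1 h1 h2
  · rw [part, hrest, hP']

theorem part_inj {a b a' b' : ℕ} (ha : a ∈ capList) (hb : b ∈ capList) (h : tripOk a b = true)
    (ha' : a' ∈ capList) (hb' : b' ∈ capList) (h' : tripOk a' b' = true)
    (he : part a b = part a' b') : a = a' ∧ b = b' := by
  rw [tripOk_iff] at h h'
  obtain ⟨h1, h2, -, hc⟩ := h
  obtain ⟨h1', h2', -, hc'⟩ := h'
  have hS : ∀ m ∈ capList, toSet m ≠ toSet capS := by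
    intro m hm h
    have : (toSet m).Nonempty := maximalCap_nonempty (mem_capList hm).1
    obtain ⟨x, hx⟩ := this
    have h1 := hx
    rw [h] at h1
    rw [mem_toSet] at hx h1
    have := ((mem_capList hm).2 _ hx).2
    rw [full_testBit (code_lt x), h1] at this
    simp at this
  have key : ∀ x y c x' y' c', x ∈ capList → x' ∈ capList → y' ∈ capList → c' ∈ capList →
      ({toSet capS, toSet x, toSet y, toSet c} : Finset (Finset V)) ⊆
        {toSet capS, toSet x', toSet y', toSet c'} → x = x' ∨ x = y' ∨ x = c' := by
    intro x y c x' y' c' hx hx' hy' hc' hsub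
    have hm : toSet x ∈ ({toSet capS, toSet x', toSet y', toSet c'} : Finset (Finset V)) :=
      hsub (by simp)
    simp only [Finset.mem_insert, Finset.mem_singleton] at hm
    have inj : ∀ m ∈ capList, toSet x = toSet m → x = m := fun m hm h =>
      toSet_inj (fun n hn => ((mem_capList hx).2 n hn).1) (fun n hn => ((mem_capList hm).2 n hn).1) h
    rcases hm with h | h | h | h
    · exact absurd h (hS x hx)
    · exact Or.inl (inj _ hx' h)
    · exact Or.inr (Or.inl (inj _ hy' h))
    · exact Or.inr (Or.inr (inj _ hc' h))
  have perm1 : ∀ A B C : Finset V, ({toSet capS, A, B, C} : Finset (Finset V)) = {toSet capS, B, A, C} :=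
    fun A B C => by rw [Finset.insert_comm A]
  have perm2 : ∀ A B C : Finset V, ({toSet capS, A, B, C} : Finset (Finset V)) = {toSet capS, C, A, B} :=
    fun A B C => by rw [Finset.pair_comm B C, Finset.insert_comm A]
  unfold part at he
  have e1 := key _ _ _ _ _ _ ha ha' hb' hc' he.subset
  have e2 := key _ _ _ _ _ _ hb ha' hb' hc' ((perm1 _ _ _).symm.trans he).subset
  have e3 := key _ _ _ _ _ _ hc ha' hb' hc' ((perm2 _ _ _).symm.trans he).subset
  generalize rest a b = c at *
  generalize rest a' b' = c' at *
  omega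

/-- The pairs describing the partitions. -/
noncomputable def pairs : List (ℕ × ℕ) :=
  (capList.product capList).filter fun e => tripOk e.1 e.2

theorem pairs_length : pairs.length = 216 := by
  rw [pairs, ← List.countP_eq_length_filter, List.product, List.countP_flatMap, ← capList_count]
  congr 1

theorem count_std : Nat.card {P : Finset (Finset V) // IsCapPartition P ∧ toSet capS ∈ P} = 216 := by
  have hmem : ∀ e : ℕ × ℕ, e ∈ pairs.toFinset ↔ (e.1 ∈ capList ∧ e.2 ∈ capList) ∧
      tripOk e.1 e.2 = true := by
    rintro ⟨a, b⟩
    rw [List.mem_toFinset, pairs, List.mem_filter]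
    exact and_congr_left fun _ => List.pair_mem_product
  have hnd : pairs.Nodup := (capList_nodup.product capList_nodup).filter _
  rw [Nat.subtype_card (pairs.toFinset.image fun e => part e.1 e.2)]
  · rw [Finset.card_image_of_injOn, List.toFinset_card_of_nodup hnd, pairs_length]
    rintro ⟨a, b⟩ h ⟨a', b'⟩ h' he
    rw [Finset.mem_coe, hmem] at h h'
    obtain ⟨e1, e2⟩ := part_inj h.1.1 h.1.2 h.2 h'.1.1 h'.1.2 h'.2 he
    simp only at e1 e2
    rw [e1, e2]
  · intro P
    rw [Finset.mem_image]
    constructor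
    · rintro ⟨⟨a, b⟩, h, rfl⟩
      rw [hmem, tripOk_iff] at h
      obtain ⟨⟨ha, hb⟩, _, _, hab, hc⟩ := h
      exact ⟨part_ok ha hb hab hc, by simp [part]⟩
    · rintro ⟨hP, hS⟩
      obtain ⟨a, ha, b, hb, h, rfl⟩ := exists_part hP hS
      exact ⟨(a, b), (hmem _).2 ⟨⟨ha, hb⟩, h⟩, rfl⟩

theorem occurs_std {T : Finset V} (hT : MaximalCap T) (hd : Disjoint (toSet capS) T) :
    ∃ P, IsCapPartition P ∧ toSet capS ∈ P ∧ T ∈ P := by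
  have h := maximalCap_iff.1 hT
  obtain ⟨m, hm, rfl⟩ := disjoint_caps h.1 h.2 hd
  obtain ⟨b, hb, hmb⟩ := List.any_eq_true.1 (List.all_eq_true.1 capList_partner m hm)
  rw [pairOk_iff] at hmb
  exact ⟨part m b, part_ok hm hb hmb.1 hmb.2, by simp [part], by simp [part]⟩

theorem maximalCap_map {e : V ≃ V} (he : Good e) {C : Finset V} (h : MaximalCap C) :
    MaximalCap (C.map e.toEmbedding) := by
  rw [maximalCap_iff] at h ⊢
  have hE := he.eqv_map C
  exact ⟨hE.isCap h.1, hE.card ▸ h.2⟩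

theorem partition_map {e : V ≃ V} (he : Good e) {P : Finset (Finset V)} (hP : IsCapPartition P) :
    IsCapPartition (P.map e.finsetCongr.toEmbedding) := by
  obtain ⟨h4, hmax, hdis, p, hp⟩ := hP
  refine ⟨by rw [Finset.card_map, h4], ?_, ?_, e p, ?_⟩
  · intro C hC
    obtain ⟨C', hC', rfl⟩ := Finset.mem_map.1 hC
    exact maximalCap_map he (hmax C' hC')
  · intro C hC D hD hne
    obtain ⟨C', hC', rfl⟩ := Finset.mem_map.1 hC
    obtain ⟨D', hD', rfl⟩ := Finset.mem_map.1 hD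
    have hCD : C' ≠ D' := fun h => hne (by rw [h])
    exact (Finset.disjoint_map e.toEmbedding).2 (hdis C' hC' D' hD' hCD)
  · ext x
    obtain ⟨x, rfl⟩ := e.surjective x
    have h1 : x ∈ P.sup id ↔ x ∈ Finset.univ \ {p} := by rw [hp]
    simp only [Finset.mem_sup, id, Finset.mem_sdiff, Finset.mem_univ, true_and,
      Finset.mem_singleton] at h1
    simp only [Finset.mem_sup, id, Finset.mem_sdiff, Finset.mem_univ, true_and,
      Finset.mem_singleton, EmbeddingLike.apply_eq_iff_eq]
    rw [← h1]
    constructor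
    · rintro ⟨C, hC, hx⟩
      obtain ⟨C', hC', rfl⟩ := Finset.mem_map.1 hC
      exact ⟨C', hC', (mem_map_equiv e C' x).2 hx⟩
    · rintro ⟨C, hC, hx⟩
      exact ⟨_, Finset.mem_map.2 ⟨C, hC, rfl⟩, (mem_map_equiv e C x).1 hx⟩

theorem partition_map_iff {e : V ≃ V} (he : Good e) (P : Finset (Finset V)) :
    IsCapPartition (P.map e.finsetCongr.toEmbedding) ↔ IsCapPartition P := by
  refine ⟨fun h => ?_, partition_map he⟩
  have h1 := partition_map he.symm h
  have h2 : (P.map e.finsetCongr.toEmbedding).map e.symm.finsetCongr.toEmbedding = P := by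
    ext C
    simp [Finset.mem_map, Finset.map_map]
  rwa [h2] at h1

end AG43

/-- Every maximal cap `S` in `AG(4,3)` lies in exactly 216 cap-partitions, and every
maximal cap disjoint from `S` occurs with `S` in at least one of them. -/
theorem card_cap_partitions_containing_maximal_cap_AG43
    (S : Finset (Fin 4 → ZMod 3)) (hS : MaximalCap S) :
    Nat.card {P : Finset (Finset (Fin 4 → ZMod 3)) // IsCapPartition P ∧ S ∈ P} = 216 ∧
    ∀ T : Finset (Fin 4 → ZMod 3), MaximalCap T → Disjoint S T →
      ∃ P : Finset (Finset (Fin 4 → ZMod 3)), IsCapPartition P ∧ S ∈ P ∧ T ∈ P := by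
  obtain ⟨hc, h20⟩ := AG43.maximalCap_iff.1 hS
  obtain ⟨e, he, h⟩ := AG43.classify hc h20
  have hmap : S.map e.toEmbedding = AG43.toSet AG43.capS := by
    ext x
    obtain ⟨y, rfl⟩ := e.surjective x
    rw [← h y, ← AG43.mem_map_equiv e S y]
  have hmem : ∀ (C : Finset (Fin 4 → ZMod 3)) (P : Finset (Finset (Fin 4 → ZMod 3))),
      C.map e.toEmbedding ∈ P.map e.finsetCongr.toEmbedding ↔ C ∈ P := by
    intro C P
    exact Finset.mem_map' e.finsetCongr.toEmbedding
  constructor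
  · rw [← AG43.count_std]
    apply Nat.card_congr
    refine Equiv.subtypeEquiv (Equiv.finsetCongr (Equiv.finsetCongr e)) ?_
    intro P
    rw [← hmap]
    exact and_congr (AG43.partition_map_iff he P).symm (hmem S P).symm
  · intro T hT hd
    obtain ⟨P, hP, h1, h2⟩ := AG43.occurs_std (AG43.maximalCap_map he hT)
      (hmap ▸ (Finset.disjoint_map e.toEmbedding).2 hd)
    obtain ⟨Q, rfl⟩ := (Equiv.finsetCongr (Equiv.finsetCongr e)).surjective P
    rw [← hmap] at h1
    exact ⟨Q, (AG43.partition_map_iff he Q).1 hP, (hmem S Q).1 h1, (hmem T Q).1 h2⟩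
end

section
/- Let S be a maximal cap in AG(4,3) with anchor the zero vector, let T be a linear automorphism of (Fin 4 → ZMod 3) with T(S) = S (as a set), and let C be a maximal cap disjoint from S. Then the number of cap-partitions containing both S and C equals the number of cap-partitions containing both S and T(C). (Linear transformations fixing S preserve S-i-completability for i = 1, 2, 6.) -/
/-- Images of caps under injective linear maps are caps. -/
theorem isCap_map_aux (T : (Fin 4 → ZMod 3) ≃ₗ[ZMod 3] (Fin 4 → ZMod 3))
    (C : Finset (Fin 4 → ZMod 3)) (h : IsCap C) : IsCap (C.image (fun x => T x)) := by
  intro x hx y hy z hz hxy hxz hyz h0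
  simp only [Finset.mem_image] at hx hy hz
  obtain ⟨x, hx, rfl⟩ := hx
  obtain ⟨y, hy, rfl⟩ := hy
  obtain ⟨z, hz, rfl⟩ := hz
  refine h x hx y hy z hz (fun e => hxy (by rw [e])) (fun e => hxz (by rw [e]))
    (fun e => hyz (by rw [e])) ?_
  apply T.injective
  simpa using h0

theorem maximalCap_map_aux (T : (Fin 4 → ZMod 3) ≃ₗ[ZMod 3] (Fin 4 → ZMod 3))
    (C : Finset (Fin 4 → ZMod 3)) (h : MaximalCap C) :
    MaximalCap (C.image (fun x => T x)) := by
  refine ⟨isCap_map_aux T C h.1, fun D hD => ?_⟩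
  rw [Finset.card_image_of_injective _ T.injective]
  exact h.2 D hD

theorem image_inj_aux (T : (Fin 4 → ZMod 3) ≃ₗ[ZMod 3] (Fin 4 → ZMod 3)) :
    Function.Injective (fun C : Finset (Fin 4 → ZMod 3) => C.image (fun x => T x)) :=
  Finset.image_injective T.injective

theorem isCapPartition_map_aux (T : (Fin 4 → ZMod 3) ≃ₗ[ZMod 3] (Fin 4 → ZMod 3))
    (P : Finset (Finset (Fin 4 → ZMod 3))) (h : IsCapPartition P) :
    IsCapPartition (P.image (fun C => C.image (fun x => T x))) := by
  obtain ⟨h1, h2, h3, a, ha⟩ := h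
  refine ⟨?_, ?_, ?_, T a, ?_⟩
  · rw [Finset.card_image_of_injective _ (image_inj_aux T), h1]
  · intro D hD
    obtain ⟨C, hC, rfl⟩ := Finset.mem_image.1 hD
    exact maximalCap_map_aux T C (h2 C hC)
  · intro D hD D' hD' hne
    obtain ⟨C, hC, rfl⟩ := Finset.mem_image.1 hD
    obtain ⟨C', hC', rfl⟩ := Finset.mem_image.1 hD'
    exact (Finset.disjoint_image T.injective).2
      (h3 C hC C' hC' (fun e => hne (by rw [e])))
  · ext y
    obtain ⟨x, rfl⟩ := T.surjective y
    have hx := Finset.ext_iff.1 ha x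
    simp only [Finset.mem_sup, id, Finset.mem_sdiff, Finset.mem_univ, true_and,
      Finset.mem_singleton] at hx
    simp only [Finset.mem_sup, id, Finset.mem_sdiff, Finset.mem_univ, true_and,
      Finset.mem_singleton, T.injective.eq_iff, ← hx]
    constructor
    · rintro ⟨D, hD, hxD⟩
      obtain ⟨C, hC, rfl⟩ := Finset.mem_image.1 hD
      exact ⟨C, hC, (Finset.mem_image.1 hxD).elim
        fun w hw => T.injective hw.2 ▸ hw.1⟩
    · rintro ⟨C, hC, hxC⟩
      exact ⟨_, Finset.mem_image_of_mem _ hC, Finset.mem_image_of_mem _ hxC⟩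

theorem image_symm_image_aux (T : (Fin 4 → ZMod 3) ≃ₗ[ZMod 3] (Fin 4 → ZMod 3))
    (C : Finset (Fin 4 → ZMod 3)) :
    (C.image (fun x => T x)).image (fun x => T.symm x) = C := by
  simp [Finset.image_image, Function.comp_def]

theorem image_image_symm_aux (T : (Fin 4 → ZMod 3) ≃ₗ[ZMod 3] (Fin 4 → ZMod 3))
    (C : Finset (Fin 4 → ZMod 3)) :
    (C.image (fun x => T.symm x)).image (fun x => T x) = C := by
  simp [Finset.image_image, Function.comp_def]

/-- A linear automorphism fixing a maximal cap `S` (with anchor the zero vector) as a set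
preserves the number of cap-partitions a disjoint cap lies in with `S`, i.e. it preserves
S-i-completability for i = 1, 2, 6. -/
theorem linear_stabilizer_preserves_completability_AG43
    (S : Finset (Fin 4 → ZMod 3)) (hS : MaximalCap S) (haS : ∑ x ∈ S, x = 0)
    (T : (Fin 4 → ZMod 3) ≃ₗ[ZMod 3] (Fin 4 → ZMod 3))
    (hT : S.image (fun x => T x) = S)
    (C : Finset (Fin 4 → ZMod 3)) (hC : MaximalCap C) (hdisj : Disjoint S C) :
    Nat.card {P : Finset (Finset (Fin 4 → ZMod 3)) //
        IsCapPartition P ∧ S ∈ P ∧ C ∈ P} =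
      Nat.card {P : Finset (Finset (Fin 4 → ZMod 3)) //
        IsCapPartition P ∧ S ∈ P ∧ C.image (fun x => T x) ∈ P} := by
  refine Nat.card_congr
    { toFun := fun P => ⟨P.1.image (fun C => C.image (fun x => T x)),
        isCapPartition_map_aux T P.1 P.2.1, ?_, Finset.mem_image_of_mem _ P.2.2.2⟩
      invFun := fun P => ⟨P.1.image (fun C => C.image (fun x => T.symm x)),
        isCapPartition_map_aux T.symm P.1 P.2.1, ?_, ?_⟩
      left_inv := ?_
      right_inv := ?_ }
  · exact Finset.mem_image.2 ⟨S, P.2.2.1, hT⟩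
  · refine Finset.mem_image.2 ⟨S, P.2.2.1, ?_⟩
    conv_lhs => rw [← hT]
    exact image_symm_image_aux T S
  · exact Finset.mem_image.2 ⟨_, P.2.2.2, image_symm_image_aux T C⟩
  · rintro ⟨P, hP⟩
    apply Subtype.ext
    change (P.image _).image _ = P
    rw [Finset.image_image]
    conv_rhs => rw [← Finset.image_id (s := P)]
    exact Finset.image_congr fun D _ => image_symm_image_aux T D
  · rintro ⟨P, hP⟩
    apply Subtype.ext
    change (P.image _).image _ = P
    rw [Finset.image_image]
    conv_rhs => rw [← Finset.image_id (s := P)]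
    exact Finset.image_congr fun D _ => image_image_symm_aux T D
end
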